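/- For every K ∈ T^d, the discrete spectrum of H(K) is characterized as σ_disc(H(K)) = {z ∈ ℂ \ Σ_K : I − T(K, z) is not injective}, i.e. a point z outside Σ_K belongs to σ(H(K)) if and only if the compact operator T(K, z) has eigenvalue 1. -/

import Mathlib

open MeasureTheory Complex Filter Topology Set

noncomputable section

instance fact2pi : Fact (0 < 2 * Real.pi) := ⟨by positivity⟩

/-- The d-dimensional torus `(-π, π]^d` with its Haar (Lebesgue) measure. -/
abbrev Td (d : ℕ) : Type := Fin d → AddCircle (2 * Real.pi)

/-- The Hilbert space `L²(T^d)`. -/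
abbrev L2 (d : ℕ) := Lp ℂ 2 (volume : Measure (Td d))

/-- The Hilbert space `L²((T^d)²)`. -/
abbrev L2two (d : ℕ) := Lp ℂ 2 (volume : Measure (Td d × Td d))

/-- The swap map on `L²((T^d)²)`, `(S f)(p,q) = f(q,p)`. -/
def swapL (d : ℕ) : L2two d →ₗ[ℂ] L2two d :=
  Lp.compMeasurePreservingₗ ℂ Prod.swap MeasureTheory.Measure.measurePreserving_swap

/-- The subspace `L²_sym((T^d)²)` of symmetric functions, as the fixed-point space of swap. -/
def symSub (d : ℕ) : Submodule ℂ (L2two d) := LinearMap.ker (swapL d - LinearMap.id)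

abbrev L2sym (d : ℕ) := ↥(symSub d)

instance (d : ℕ) : CompleteSpace (L2sym d) := by
  have hiso : Isometry (swapL d) :=
    Lp.isometry_compMeasurePreserving MeasureTheory.Measure.measurePreserving_swap
  have hcl : IsClosed ((symSub d : Set (L2two d))) := by
    have h1 : (symSub d : Set (L2two d)) = {f | swapL d f = f} := by
      ext f
      simp [symSub, LinearMap.mem_ker, sub_eq_zero, LinearMap.sub_apply]
    rw [h1]
    exact isClosed_eq hiso.continuous continuous_id
  exact hcl.completeSpace_coe

/-- The Hilbert space `ℂ ⊕ L²(T^d)`. -/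
abbrev Hkk (d : ℕ) := WithLp 2 (ℂ × L2 d)

/-- The zero-particle component of an element of `ℂ ⊕ L²(T^d)`. -/
def pk1 {d : ℕ} (f : Hkk d) : ℂ := (WithLp.equiv 2 (ℂ × L2 d) f).1

/-- The one-particle component of an element of `ℂ ⊕ L²(T^d)`. -/
def pk2 {d : ℕ} (f : Hkk d) : L2 d := (WithLp.equiv 2 (ℂ × L2 d) f).2

/-- The Hilbert space `H = ℂ ⊕ L²(T^d) ⊕ L²_sym((T^d)²)`. -/
abbrev H3 (d : ℕ) := WithLp 2 (ℂ × WithLp 2 (L2 d × L2sym d))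

/-- The zero-particle component. -/
def p0 {d : ℕ} (f : H3 d) : ℂ := (WithLp.equiv 2 _ f).1

/-- The one-particle component. -/
def p1 {d : ℕ} (f : H3 d) : L2 d := (WithLp.equiv 2 _ ((WithLp.equiv 2 _ f).2)).1

/-- The two-particle component, as an element of `L²((T^d)²)`. -/
def p2 {d : ℕ} (f : H3 d) : L2two d :=
  ((WithLp.equiv 2 _ ((WithLp.equiv 2 _ f).2)).2 : L2sym d)

/-- The essential spectrum of a bounded operator on a Hilbert space, via the Weyl criterion:
`λ ∈ σ_ess(A)` iff there is an orthonormal (singular) sequence `u` with `‖(A - λ)uₙ‖ → 0`. -/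
def essSpec {H' : Type*} [NormedAddCommGroup H'] [InnerProductSpace ℂ H']
    (A : H' →L[ℂ] H') : Set ℂ :=
  {l | ∃ u : ℕ → H', Orthonormal ℂ u ∧
        Tendsto (fun n => ‖A (u n) - l • u n‖) atTop (𝓝 0)}

variable {d : ℕ}

/-- `E_min(K,k) = min_q w₂(K; k, q)`. -/
def Emin (w₂ : Td d → Td d → Td d → ℝ) (K k : Td d) : ℝ := ⨅ q, w₂ K k q

/-- `E_max(K,k) = max_q w₂(K; k, q)`. -/
def Emax (w₂ : Td d → Td d → Td d → ℝ) (K k : Td d) : ℝ := ⨆ q, w₂ K k q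

/-- `m_K = min_{p,q} w₂(K; p, q)`. -/
def mK (w₂ : Td d → Td d → Td d → ℝ) (K : Td d) : ℝ := ⨅ x : Td d × Td d, w₂ K x.1 x.2

/-- `M_K = max_{p,q} w₂(K; p, q)`. -/
def MK (w₂ : Td d → Td d → Td d → ℝ) (K : Td d) : ℝ := ⨆ x : Td d × Td d, w₂ K x.1 x.2

/-- The Fredholm determinant
`Δ_K(k; z) = w₁(K,k) − z − (1/2) ∫ v₁(t)² / (w₂(K;k,t) − z) dt`. -/
def Delta (v₁ : Td d → ℝ) (w₁ : Td d → Td d → ℝ) (w₂ : Td d → Td d → Td d → ℝ)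
    (K k : Td d) (z : ℂ) : ℂ :=
  (w₁ K k : ℂ) - z - (1 / 2) * ∫ t, (v₁ t : ℂ) ^ 2 / ((w₂ K k t : ℂ) - z)

/-- The interval `[E_min(K,k), E_max(K,k)]`, viewed inside `ℂ`. -/
def bandKk (w₂ : Td d → Td d → Td d → ℝ) (K k : Td d) : Set ℂ :=
  Complex.ofReal '' Set.Icc (Emin w₂ K k) (Emax w₂ K k)

/-- The interval `[m_K, M_K]`, viewed inside `ℂ`. -/
def bigBand (w₂ : Td d → Td d → Td d → ℝ) (K : Td d) : Set ℂ :=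
  Complex.ofReal '' Set.Icc (mK w₂ K) (MK w₂ K)

/-- The two-particle branch
`Λ_K = {z : ∃ k, z ∉ [E_min(K,k), E_max(K,k)] ∧ Δ_K(k; z) = 0}`. -/
def LamK (v₁ : Td d → ℝ) (w₁ : Td d → Td d → ℝ) (w₂ : Td d → Td d → Td d → ℝ)
    (K : Td d) : Set ℂ :=
  {z | ∃ k, z ∉ bandKk w₂ K k ∧ Delta v₁ w₁ w₂ K k z = 0}

/-- `Σ_K = [m_K, M_K] ∪ Λ_K`. -/
def SigK (v₁ : Td d → ℝ) (w₁ : Td d → Td d → ℝ) (w₂ : Td d → Td d → Td d → ℝ)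
    (K : Td d) : Set ℂ :=
  bigBand w₂ K ∪ LamK v₁ w₁ w₂ K

/-- The defining equations of the `3×3` operator matrix `H(K)` acting on
`ℂ ⊕ L²(T^d) ⊕ L²_sym((T^d)²)`:
`(H f)₀ = w₀(K) f₀ + ∫ v₀(t) f₁(t) dt`,
`(H f)₁(p) = v₀(p) f₀ + w₁(K; p) f₁(p) + ∫ v₁(t) f₂(p,t) dt`,
`(H f)₂(p,q) = (1/2)(v₁(p) f₁(q) + v₁(q) f₁(p)) + w₂(K; p,q) f₂(p,q)`. -/
def IsHamiltonian {d : ℕ} (w₀ v₀ v₁ : Td d → ℝ) (w₁ : Td d → Td d → ℝ)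
    (w₂ : Td d → Td d → Td d → ℝ) (K : Td d) (H : H3 d →L[ℂ] H3 d) : Prop :=
  ∀ f : H3 d,
    (p0 (H f) = (w₀ K : ℂ) * p0 f + (∫ t, (v₀ t : ℂ) * (p1 f) t)) ∧
    (⇑(p1 (H f)) =ᵐ[volume] fun p =>
        (v₀ p : ℂ) * p0 f + (w₁ K p : ℂ) * (p1 f) p +
          (∫ t, (v₁ t : ℂ) * (p2 f) (p, t))) ∧
    (⇑(p2 (H f)) =ᵐ[volume] fun x : Td d × Td d =>
        ((v₁ x.1 : ℂ) * (p1 f) x.2 + (v₁ x.2 : ℂ) * (p1 f) x.1) / 2 +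
          (w₂ K x.1 x.2 : ℂ) * (p2 f) x)

/-- The defining equations of the `2×2` block operator matrix `T(K, z)` acting on
`ℂ ⊕ L²(T^d)`:
`(T g)₀ = (1 + w₀(K) − z) g₀ + ∫ v₀(t) g₁(t) dt`,
`(T g)₁(p) = −v₀(p) g₀ / Δ_K(p; z) + (v₁(p)/(2Δ_K(p; z))) ∫ v₁(t) g₁(t)/(w₂(K;p,t) − z) dt`. -/
def IsTOp {d : ℕ} (w₀ v₀ v₁ : Td d → ℝ) (w₁ : Td d → Td d → ℝ)
    (w₂ : Td d → Td d → Td d → ℝ) (K : Td d) (z : ℂ) (T : Hkk d →L[ℂ] Hkk d) : Prop :=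
  ∀ g : Hkk d,
    (pk1 (T g) = (1 + (w₀ K : ℂ) - z) * pk1 g + (∫ t, (v₀ t : ℂ) * (pk2 g) t)) ∧
    (⇑(pk2 (T g)) =ᵐ[volume] fun p =>
        -((v₀ p : ℂ) * pk1 g) / Delta v₁ w₁ w₂ K p z +
          (v₁ p : ℂ) / (2 * Delta v₁ w₁ w₂ K p z) *
            (∫ t, (v₁ t : ℂ) * (pk2 g) t / ((w₂ K p t : ℂ) - z)))

/-!
A point lies outside the essential spectrum of a bounded operator `A` exactly when every weakly
null sequence `u` with `(A - z) u → 0` tends to `0` in norm; for self-adjoint `A` such a point of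
the spectrum is an eigenvalue.

For `z` outside the range of `w₂`, the two-particle component of `(H - z) f` determines that of
`f`, and eliminating it leaves on `L²(T^d)` the Schur complement: multiplication by `Δ(·; z)` minus
an integral operator. The integral operator sends weakly null sequences to null sequences, so only
zeros of `Δ(·; z)` can produce essential spectrum, and they do, by testing with unit vectors
concentrating at a zero. Symmetrised products of concentrating vectors show that the range of `w₂`
belongs to the essential spectrum as well. For the remaining `z`, the equation `H f = z f` after
elimination and division by `Δ(·; z)` is the fixed point equation of `T(K, z)`.
-/

section WeaklyNull

variable {𝕜 E F : Type*} [RCLike 𝕜] [NormedAddCommGroup E] [InnerProductSpace 𝕜 E]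
  [NormedAddCommGroup F] [InnerProductSpace 𝕜 F] {u v : ℕ → E}

/-- A sequence in an inner product space converges weakly to zero. -/
def IsWeaklyNull (𝕜 : Type*) {E : Type*} [RCLike 𝕜] [NormedAddCommGroup E]
    [InnerProductSpace 𝕜 E] (u : ℕ → E) : Prop :=
  ∀ x : E, Tendsto (fun n => inner 𝕜 x (u n)) atTop (𝓝 0)

theorem isWeaklyNull_of_orthonormal (hu : Orthonormal 𝕜 u) : IsWeaklyNull 𝕜 u := by
  intro x
  have hsq : Tendsto (fun n => ‖inner 𝕜 (u n) x‖ ^ 2) atTop (𝓝 0) :=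
    (hu.inner_products_summable x).tendsto_atTop_zero
  have hnorm : Tendsto (fun n => ‖inner 𝕜 (u n) x‖) atTop (𝓝 0) := by
    simpa [Real.sqrt_sq] using hsq.sqrt
  exact tendsto_zero_iff_norm_tendsto_zero.2 (by simpa only [norm_inner_symm] using hnorm)

namespace IsWeaklyNull

theorem add (hu : IsWeaklyNull 𝕜 u) (hv : IsWeaklyNull 𝕜 v) :
    IsWeaklyNull 𝕜 fun n => u n + v n := fun x => by
  simpa only [inner_add_right, add_zero] using (hu x).add (hv x)

theorem map [CompleteSpace E] [CompleteSpace F] (hu : IsWeaklyNull 𝕜 u) (A : E →L[𝕜] F) :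
    IsWeaklyNull 𝕜 fun n => A (u n) := fun y => by
  simpa only [ContinuousLinearMap.adjoint_inner_left] using hu (A.adjoint y)

theorem exists_norm_le [CompleteSpace E] (hu : IsWeaklyNull 𝕜 u) : ∃ C, ∀ n, ‖u n‖ ≤ C := by
  obtain ⟨C, hC⟩ := banach_steinhaus (g := fun n => innerSL 𝕜 (u n)) fun x => by
    obtain ⟨C, hC⟩ := (hu x).norm.bddAbove_range
    exact ⟨C, fun n => by simpa only [innerSL_apply_apply, norm_inner_symm x] using hC ⟨n, rfl⟩⟩
  exact ⟨C, fun n => by simpa only [innerSL_apply_norm] using hC n⟩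

theorem tendsto_zero [FiniteDimensional 𝕜 E] (hu : IsWeaklyNull 𝕜 u) :
    Tendsto u atTop (𝓝 0) := by
  let b := stdOrthonormalBasis 𝕜 E
  have hsum : Tendsto (fun n => ∑ i, inner 𝕜 (b i) (u n) • b i) atTop (𝓝 (∑ i, (0 : 𝕜) • b i)) :=
    tendsto_finsetSum _ fun i _ => (hu (b i)).smul_const _
  simpa only [b.sum_repr', zero_smul, Finset.sum_const_zero] using hsum

end IsWeaklyNull

end WeaklyNull

section EssentialSpectrum

theorem isClosed_range_of_le_norm_on_orthogonal {𝕜 E F : Type*} [RCLike 𝕜] [NormedAddCommGroup E]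
    [InnerProductSpace 𝕜 E] [CompleteSpace E] [NormedAddCommGroup F] [NormedSpace 𝕜 F]
    (B : E →L[𝕜] F) (V : Submodule 𝕜 E) [FiniteDimensional 𝕜 V] {c : ℝ} (hc : 0 < c)
    (hB : ∀ u ∈ Vᗮ, c * ‖u‖ ≤ ‖B u‖) : IsClosed (B.range : Set F) := by
  have hanti : AntilipschitzWith (Real.toNNReal c⁻¹) (B.comp Vᗮ.subtypeL) := by
    refine ContinuousLinearMap.antilipschitz_of_bound _ fun u => ?_
    rw [Real.coe_toNNReal _ (by positivity), inv_mul_eq_div, le_div_iff₀' hc]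
    exact hB u u.2
  have hmap : IsClosed (Vᗮ.map (B : E →ₗ[𝕜] F) : Set F) := by
    convert hanti.isClosed_range (B.comp Vᗮ.subtypeL).uniformContinuous using 1
    ext y
    simp
  rw [← Submodule.map_top, ← Submodule.sup_orthogonal_of_hasOrthogonalProjection (K := V),
    Submodule.map_sup, sup_comm]
  exact Submodule.isClosed_sup_finiteDimensional _ _ hmap

variable {E : Type*} [NormedAddCommGroup E] [InnerProductSpace ℂ E]

theorem exists_unit_approx_eigenvector {A : E →L[ℂ] E} {z : ℂ} {V : Submodule ℂ E} {ε : ℝ} {u : E}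
    (hu : u ∈ Vᗮ) (hlt : ‖A u - z • u‖ < ε * ‖u‖) :
    ∃ e ∈ Vᗮ, ‖e‖ = 1 ∧ ‖A e - z • e‖ < ε := by
  have hu0 : u ≠ 0 := by
    rintro rfl
    simp at hlt
  have hpos : 0 < ‖u‖ := norm_pos_iff.2 hu0
  refine ⟨((‖u‖⁻¹ : ℝ) : ℂ) • u, Vᗮ.smul_mem _ hu, by simp [norm_smul, hpos.ne'], ?_⟩
  rw [map_smul, smul_comm, ← smul_sub, norm_smul, Complex.norm_real,
    Real.norm_of_nonneg (by positivity), inv_mul_lt_iff₀' hpos]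
  exact hlt

/-- If no finite-dimensional subspace has the stated property, approximate eigenvectors can be
chosen inductively, each orthogonal to all the previous ones. -/
theorem exists_le_norm_on_orthogonal_of_notMem_essSpec {A : E →L[ℂ] E} {z : ℂ}
    (hz : z ∉ essSpec A) :
    ∃ V : Submodule ℂ E, FiniteDimensional ℂ V ∧
      ∃ c > 0, ∀ u ∈ Vᗮ, c * ‖u‖ ≤ ‖A u - z • u‖ := by
  contrapose! hz with hsmall
  obtain ⟨f, hf, hlt⟩ := exists_seq_of_forall_finset_exists
    (fun x : ℕ × E => ‖x.2‖ = 1 ∧ ‖A x.2 - z • x.2‖ < 1 / ((x.1 : ℝ) + 1))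
    (fun x y => x.1 < y.1 ∧ inner ℂ x.2 y.2 = 0) fun s _ => by
      let N := s.sup Prod.fst + 1
      obtain ⟨u, hu, hAu⟩ := hsmall (Submodule.span ℂ (Prod.snd '' (s : Set (ℕ × E))))
        (FiniteDimensional.span_of_finite ℂ (s.finite_toSet.image _))
        (1 / ((N : ℝ) + 1)) (by positivity)
      obtain ⟨e, he, he1, hAe⟩ := exists_unit_approx_eigenvector hu hAu
      exact ⟨(N, e), ⟨he1, hAe⟩, fun x hx => ⟨Nat.lt_succ_of_le (Finset.le_sup (f := Prod.fst) hx),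
        (Submodule.mem_orthogonal _ _).1 he _ (Submodule.subset_span ⟨x, hx, rfl⟩)⟩⟩
  have horth : Orthonormal ℂ fun n => (f n).2 := by
    refine ⟨fun n => (hf n).1, fun i j hij => ?_⟩
    rcases lt_or_gt_of_ne hij with h | h
    · exact (hlt i j h).2
    · exact inner_eq_zero_symm.1 (hlt j i h).2
  have hmono : StrictMono fun n => (f n).1 := fun i j h => (hlt i j h).1
  refine ⟨_, horth, squeeze_zero (fun _ => norm_nonneg _) (fun n => (hf n).2.le.trans ?_)
    tendsto_one_div_add_atTop_nhds_zero_nat⟩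
  have hle : (n : ℝ) ≤ ((f n).1 : ℝ) := mod_cast hmono.le_apply
  gcongr

theorem notMem_essSpec_iff [CompleteSpace E] {A : E →L[ℂ] E} {z : ℂ} :
    z ∉ essSpec A ↔ ∀ u : ℕ → E, IsWeaklyNull ℂ u →
      Tendsto (fun n => A (u n) - z • u n) atTop (𝓝 0) → Tendsto u atTop (𝓝 0) := by
  refine ⟨fun hz u hu hAu => ?_, fun h ⟨u, hu, hAu⟩ => ?_⟩
  · obtain ⟨V, hV, c, hc, hbound⟩ := exists_le_norm_on_orthogonal_of_notMem_essSpec hz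
    let B : E →L[ℂ] E := A - z • ContinuousLinearMap.id ℂ E
    have hP : Tendsto (fun n => V.starProjection (u n)) atTop (𝓝 0) :=
      (V.subtypeL.continuous.tendsto' 0 0 (map_zero _)).comp
        (hu.map V.orthogonalProjectionOnto).tendsto_zero
    have hBQ : Tendsto (fun n => A (u n - V.starProjection (u n)) -
        z • (u n - V.starProjection (u n))) atTop (𝓝 0) := by
      have hdiff := hAu.sub ((B.continuous.tendsto' 0 0 (map_zero B)).comp hP)
      rw [sub_zero] at hdiff
      exact hdiff.congr fun n => (map_sub B _ _).symm
    have hQ : Tendsto (fun n => u n - V.starProjection (u n)) atTop (𝓝 0) := by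
      have hlim := hBQ.norm.const_mul c⁻¹
      rw [norm_zero, mul_zero] at hlim
      refine squeeze_zero_norm (fun n => ?_) hlim
      rw [le_inv_mul_iff₀ hc]
      exact hbound _ (V.sub_starProjection_mem_orthogonal (u n))
    simpa using hQ.add hP
  · have := (h u (isWeaklyNull_of_orthonormal hu) (tendsto_zero_iff_norm_tendsto_zero.2 hAu)).norm
    simp [hu.1] at this

theorem mem_spectrum_iff_exists_eigenvector [CompleteSpace E] {A : E →L[ℂ] E} {z : ℂ}
    (hA : IsSelfAdjoint A) (hz : z ∉ essSpec A) :
    z ∈ spectrum ℂ A ↔ ∃ u, u ≠ 0 ∧ A u = z • u := by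
  have happ (u : E) : (algebraMap ℂ (E →L[ℂ] E) z - A) u = z • u - A u := by
    simp [Algebra.algebraMap_eq_smul_one]
  refine ⟨fun hs => ?_, fun ⟨u, hu, hAu⟩ hunit => hu ?_⟩
  · by_contra! hno
    obtain ⟨V, _, c, hc, hbound⟩ := exists_le_norm_on_orthogonal_of_notMem_essSpec hz
    let B : E →L[ℂ] E := algebraMap ℂ _ z - A
    have hker : B.ker = ⊥ := (Submodule.eq_bot_iff _).2 fun u hu => by
      by_contra hu0
      exact hno u hu0 (sub_eq_zero.1 ((happ u).symm.trans hu)).symm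
    have hBsa : IsSelfAdjoint B := by
      have hzre : z = (z.re : ℂ) := hA.mem_spectrum_eq_re hs
      refine .sub (.algebraMap _ ?_) hA
      rw [hzre]
      exact Complex.conj_ofReal _
    have hclosed : IsClosed (B.range : Set E) :=
      isClosed_range_of_le_norm_on_orthogonal B V hc fun u hu => by
        rw [happ, norm_sub_rev]
        exact hbound u hu
    have hrange : B.range = ⊤ := by
      have : CompleteSpace B.range := hclosed.completeSpace_coe
      rw [← Submodule.orthogonal_eq_bot_iff, ContinuousLinearMap.orthogonal_range,
        hBsa.adjoint_eq, hker]
    exact hs (ContinuousLinearMap.isUnit_iff_bijective.2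
      ⟨LinearMap.ker_eq_bot.1 hker, LinearMap.range_eq_top.1 hrange⟩)
  · refine (ContinuousLinearMap.isUnit_iff_bijective.1 hunit).1 ?_
    rw [happ, hAu, sub_self, map_zero]

end EssentialSpectrum

section LpOperators

open scoped ENNReal ComplexConjugate

variable {𝕜 X : Type*} [RCLike 𝕜]
  [TopologicalSpace X] [CompactSpace X] [MeasurableSpace X] [BorelSpace X]
  {μ : Measure X} [IsFiniteMeasure μ]

theorem coeFn_holderL_toLp (m : C(X, 𝕜)) (f : Lp 𝕜 2 μ) :
    ⇑((ContinuousLinearMap.mul 𝕜 𝕜).holderL μ ∞ 2 2 (ContinuousMap.toLp ∞ μ 𝕜 m) f)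
      =ᵐ[μ] fun x => m x * f x := by
  filter_upwards [(ContinuousLinearMap.mul 𝕜 𝕜).coeFn_holder (r := 2)
    (ContinuousMap.toLp ∞ μ 𝕜 m) f, ContinuousMap.coeFn_toLp (p := ∞) (𝕜 := 𝕜) μ m] with x hx hm
  rw [ContinuousLinearMap.holderL_apply_apply, hx, hm, ContinuousLinearMap.mul_apply']

variable (μ) in
/-- Multiplication by a continuous function as an operator on `L²(μ)`. -/
def mulLp : C(X, 𝕜) →ₐ[𝕜] Lp 𝕜 2 μ →L[𝕜] Lp 𝕜 2 μ :=
  .ofLinearMap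
    ((ContinuousLinearMap.mul 𝕜 𝕜).holderL μ ∞ 2 2 ∘L ContinuousMap.toLp ∞ μ 𝕜).toLinearMap
    (by
      ext1 f
      refine Lp.ext ?_
      filter_upwards [coeFn_holderL_toLp (1 : C(X, 𝕜)) f] with x hx
      simpa using hx)
    (fun m m' => by
      ext1 f
      refine Lp.ext ?_
      filter_upwards [coeFn_holderL_toLp (m * m') f, coeFn_holderL_toLp m' f,
        coeFn_holderL_toLp m ((ContinuousLinearMap.mul 𝕜 𝕜).holderL μ ∞ 2 2
          (ContinuousMap.toLp ∞ μ 𝕜 m') f)] with x h₁ h₂ h₃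
      exact h₁.trans (((mul_assoc _ _ _).trans (congrArg _ h₂.symm)).trans h₃.symm))

theorem coeFn_mulLp (m : C(X, 𝕜)) (f : Lp 𝕜 2 μ) : ⇑(mulLp μ m f) =ᵐ[μ] fun x => m x * f x :=
  coeFn_holderL_toLp m f

theorem mulLp_sub_apply (m m' : C(X, 𝕜)) (f : Lp 𝕜 2 μ) :
    mulLp μ (m - m') f = mulLp μ m f - mulLp μ m' f := by
  rw [map_sub, sub_apply]

theorem mulLp_smul_apply (c : 𝕜) (m : C(X, 𝕜)) (f : Lp 𝕜 2 μ) :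
    mulLp μ (c • m) f = c • mulLp μ m f := by
  rw [map_smul, smul_apply]

theorem mulLp_sub_algebraMap_apply (m : C(X, 𝕜)) (c : 𝕜) (f : Lp 𝕜 2 μ) :
    mulLp μ (m - algebraMap 𝕜 _ c) f = mulLp μ m f - c • f := by
  rw [mulLp_sub_apply, AlgHom.commutes, Algebra.algebraMap_eq_smul_one]
  rfl

theorem mulLp_eq_iff_of_mul_eq_one {m m' : C(X, 𝕜)} (h : m' * m = 1) {f g : Lp 𝕜 2 μ} :
    mulLp μ m f = g ↔ f = mulLp μ m' g := by
  have hcomp {k k' : C(X, 𝕜)} (hk : k * k' = 1) (f : Lp 𝕜 2 μ) : mulLp μ k (mulLp μ k' f) = f :=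
    calc mulLp μ k (mulLp μ k' f) = mulLp μ (k * k') f := by rw [map_mul]; rfl
      _ = f := by rw [hk, map_one]; rfl
  constructor
  · rintro rfl
    exact (hcomp h f).symm
  · rintro rfl
    exact hcomp ((mul_comm _ _).trans h) g

theorem tendsto_zero_of_tendsto_mulLp {m : C(X, 𝕜)} (hm : IsUnit m) {f : ℕ → Lp 𝕜 2 μ}
    (hf : Tendsto (fun n => mulLp μ m (f n)) atTop (𝓝 0)) : Tendsto f atTop (𝓝 0) := by
  obtain ⟨m', hm'⟩ := hm.exists_left_inv
  refine (((mulLp μ m').continuous.tendsto' 0 0 (map_zero _)).comp hf).congr fun n => ?_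
  exact ((mulLp_eq_iff_of_mul_eq_one hm').1 rfl).symm

theorem inner_mulLp_left (m : C(X, 𝕜)) (f g : Lp 𝕜 2 μ) :
    inner 𝕜 (mulLp μ m f) g = inner 𝕜 f (mulLp μ (star m) g) := by
  rw [L2.inner_def, L2.inner_def]
  refine integral_congr_ae ?_
  filter_upwards [coeFn_mulLp m f, coeFn_mulLp (star m) g] with x hf hg
  simp only [hf, hg, RCLike.inner_apply, map_mul, ContinuousMap.star_apply, RCLike.star_def]
  ring

theorem inner_toLp_left (m : C(X, 𝕜)) (f : Lp 𝕜 2 μ) :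
    inner 𝕜 (ContinuousMap.toLp 2 μ 𝕜 m) f = ∫ x, conj (m x) * f x ∂μ := by
  rw [L2.inner_def]
  refine integral_congr_ae ?_
  filter_upwards [ContinuousMap.coeFn_toLp (p := 2) (𝕜 := 𝕜) μ m] with x hx
  rw [hx, RCLike.inner_apply']

theorem norm_sq_eq_integral {α : Type*} [MeasurableSpace α] {ρ : Measure α} (f : Lp 𝕜 2 ρ) :
    ‖f‖ ^ 2 = ∫ x, ‖f x‖ ^ 2 ∂ρ := by
  rw [← RCLike.ofReal_inj (K := 𝕜), RCLike.ofReal_pow, ← inner_self_eq_norm_sq_to_K, L2.inner_def,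
    ← integral_ofReal]
  simp only [inner_self_eq_norm_sq_to_K, RCLike.ofReal_pow]

end LpOperators

section Tensor

open scoped ComplexConjugate

variable {𝕜 X Y : Type*} [RCLike 𝕜] [MeasurableSpace X] [MeasurableSpace Y]
  {μ : Measure X} {ν : Measure Y}

theorem memLp_two_mul_prod (f : Lp 𝕜 2 μ) (g : Lp 𝕜 2 ν) :
    MemLp (fun z : X × Y => f z.1 * g z.2) 2 (μ.prod ν) := by
  refine (memLp_two_iff_integrable_sq_norm
    ((Lp.aestronglyMeasurable f).comp_fst.mul (Lp.aestronglyMeasurable g).comp_snd)).2 ?_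
  simpa only [Pi.mul_apply, norm_mul, mul_pow] using
    ((Lp.memLp f).integrable_norm_pow two_ne_zero).mul_prod
      ((Lp.memLp g).integrable_norm_pow two_ne_zero)

variable [SFinite μ] [SFinite ν]

theorem inner_toLp_mul_prod (f f' : Lp 𝕜 2 μ) (g g' : Lp 𝕜 2 ν) :
    inner 𝕜 (memLp_two_mul_prod f g).toLp (memLp_two_mul_prod f' g').toLp =
      inner 𝕜 f f' * inner 𝕜 g g' := by
  simp only [L2.inner_def]
  rw [← integral_prod_mul]
  refine integral_congr_ae ?_
  filter_upwards [(memLp_two_mul_prod f g).coeFn_toLp, (memLp_two_mul_prod f' g').coeFn_toLp]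
    with z h h'
  simp only [h, h', RCLike.inner_apply, map_mul]
  ring

theorem norm_toLp_mul_prod (f : Lp 𝕜 2 μ) (g : Lp 𝕜 2 ν) :
    ‖(memLp_two_mul_prod f g).toLp‖ = ‖f‖ * ‖g‖ := by
  rw [← sq_eq_sq₀ (norm_nonneg _) (by positivity), mul_pow, ← RCLike.ofReal_inj (K := 𝕜)]
  push_cast
  simp only [← inner_self_eq_norm_sq_to_K, inner_toLp_mul_prod]

variable (𝕜 μ ν) in
/-- The tensor product `(f ⊗ g) (x, y) = f x * g y` of square-integrable functions. -/
def tensorLp : Lp 𝕜 2 μ →L[𝕜] Lp 𝕜 2 ν →L[𝕜] Lp 𝕜 2 (μ.prod ν) :=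
  LinearMap.mkContinuous₂
    (.mk₂ 𝕜 (fun f g => (memLp_two_mul_prod f g).toLp)
      (fun f f' g => by
        rw [← MemLp.toLp_add]
        refine MemLp.toLp_congr _ _ ?_
        filter_upwards [Measure.quasiMeasurePreserving_fst.ae_eq_comp (Lp.coeFn_add f f')] with z hz
        exact (congrArg (· * g z.2) hz).trans (add_mul _ _ _))
      (fun c f g => by
        rw [← MemLp.toLp_const_smul]
        refine MemLp.toLp_congr _ _ ?_
        filter_upwards [Measure.quasiMeasurePreserving_fst.ae_eq_comp (Lp.coeFn_smul c f)] with z hz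
        exact (congrArg (· * g z.2) hz).trans (smul_mul_assoc c (f z.1) (g z.2)))
      (fun f g g' => by
        rw [← MemLp.toLp_add]
        refine MemLp.toLp_congr _ _ ?_
        filter_upwards [Measure.quasiMeasurePreserving_snd.ae_eq_comp (Lp.coeFn_add g g')] with z hz
        exact (congrArg (f z.1 * ·) hz).trans (mul_add _ _ _))
      fun c f g => by
        rw [← MemLp.toLp_const_smul]
        refine MemLp.toLp_congr _ _ ?_
        filter_upwards [Measure.quasiMeasurePreserving_snd.ae_eq_comp (Lp.coeFn_smul c g)] with z hz
        exact (congrArg (f z.1 * ·) hz).trans (mul_smul_comm c (f z.1) (g z.2)))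
    1 fun f g => by
      rw [one_mul]
      exact (norm_toLp_mul_prod f g).le

theorem coeFn_tensorLp (f : Lp 𝕜 2 μ) (g : Lp 𝕜 2 ν) :
    ⇑(tensorLp 𝕜 μ ν f g) =ᵐ[μ.prod ν] fun z => f z.1 * g z.2 :=
  (memLp_two_mul_prod f g).coeFn_toLp

theorem inner_tensorLp_tensorLp (f f' : Lp 𝕜 2 μ) (g g' : Lp 𝕜 2 ν) :
    inner 𝕜 (tensorLp 𝕜 μ ν f g) (tensorLp 𝕜 μ ν f' g') = inner 𝕜 f f' * inner 𝕜 g g' :=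
  inner_toLp_mul_prod f f' g g'

theorem norm_tensorLp (f : Lp 𝕜 2 μ) (g : Lp 𝕜 2 ν) : ‖tensorLp 𝕜 μ ν f g‖ = ‖f‖ * ‖g‖ :=
  norm_toLp_mul_prod f g

end Tensor

section PartialInner

open scoped ComplexConjugate

variable {𝕜 X Y : Type*} [RCLike 𝕜] [MeasurableSpace X] [MeasurableSpace Y]
  {μ : Measure X} [IsFiniteMeasure μ] {ν : Measure Y} [IsFiniteMeasure ν]

variable (μ) in
/-- Partial inner product `(x ↦ ∫ conj (v y) * F (x, y) dy)` of `F ∈ L²(μ × ν)` with `v ∈ L²(ν)`,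
defined as the adjoint of `f ↦ f ⊗ v`. -/
def partialInner (v : Lp 𝕜 2 ν) : Lp 𝕜 2 (μ.prod ν) →L[𝕜] Lp 𝕜 2 μ :=
  ((tensorLp 𝕜 μ ν).flip v).adjoint

theorem inner_partialInner_left (v : Lp 𝕜 2 ν) (F : Lp 𝕜 2 (μ.prod ν)) (f : Lp 𝕜 2 μ) :
    inner 𝕜 (partialInner μ v F) f = inner 𝕜 F (tensorLp 𝕜 μ ν f v) :=
  ContinuousLinearMap.adjoint_inner_left _ _ _

theorem partialInner_tensorLp (v : Lp 𝕜 2 ν) (f : Lp 𝕜 2 μ) (g : Lp 𝕜 2 ν) :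
    partialInner μ v (tensorLp 𝕜 μ ν f g) = inner 𝕜 v g • f := by
  refine ext_inner_right 𝕜 fun h => ?_
  rw [inner_partialInner_left, inner_tensorLp_tensorLp, inner_smul_left, inner_conj_symm, mul_comm]

theorem integrable_conj_mul_prod (v : Lp 𝕜 2 ν) (F : Lp 𝕜 2 (μ.prod ν)) :
    Integrable (fun z : X × Y => conj (v z.2) * F z) (μ.prod ν) :=
  ((Lp.memLp v).comp_snd μ).star.integrable_mul (Lp.memLp F)

theorem coeFn_partialInner (v : Lp 𝕜 2 ν) (F : Lp 𝕜 2 (μ.prod ν)) :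
    ⇑(partialInner μ v F) =ᵐ[μ] fun x => ∫ y, conj (v y) * F (x, y) ∂ν := by
  have hint := integrable_conj_mul_prod v F
  refine Integrable.ae_eq_of_forall_setIntegral_eq _ _
    ((Lp.memLp _).integrable one_le_two) hint.integral_prod_left fun s hs hμs => ?_
  have hset : ∫ x in s, partialInner μ v F x ∂μ =
      inner 𝕜 (tensorLp 𝕜 μ ν (indicatorConstLp 2 hs hμs.ne 1) v) F := by
    rw [← L2.inner_indicatorConstLp_one hs hμs.ne, ← inner_conj_symm, inner_partialInner_left,
      inner_conj_symm]
  have hfubini : ∫ x in s, ∫ y, conj (v y) * F (x, y) ∂ν ∂μ =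
      ∫ z in s ×ˢ univ, conj (v z.2) * F z ∂μ.prod ν := by
    simp only [setIntegral_prod _ hint.integrableOn, setIntegral_univ]
  rw [hset, hfubini, L2.inner_def, ← integral_indicator (hs.prod .univ)]
  refine integral_congr_ae ?_
  filter_upwards [coeFn_tensorLp (indicatorConstLp 2 hs hμs.ne (1 : 𝕜)) v,
    Measure.quasiMeasurePreserving_fst.ae_eq_comp (indicatorConstLp_coeFn (hs := hs)
      (hμs := hμs.ne) (c := (1 : 𝕜)) (p := 2))] with z hz hind
  rw [hz, RCLike.inner_apply', show indicatorConstLp 2 hs hμs.ne (1 : 𝕜) z.1 = _ from hind]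
  by_cases h : z.1 ∈ s <;> simp [h]

end PartialInner

section IntegralOperator

open scoped ComplexConjugate

variable {𝕜 X Y : Type*} [RCLike 𝕜]
  [TopologicalSpace X] [CompactSpace X] [MeasurableSpace X] [BorelSpace X]
  [TopologicalSpace Y] [CompactSpace Y] [MeasurableSpace Y] [BorelSpace Y]
  [SecondCountableTopologyEither X Y]
  {μ : Measure X} [IsFiniteMeasure μ] {ν : Measure Y} [IsFiniteMeasure ν]

theorem coeFn_partialInner_mulLp_tensorLp (v : C(Y, 𝕜)) (k : C(X × Y, 𝕜)) (f : Lp 𝕜 2 μ)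
    (g : Lp 𝕜 2 ν) :
    ⇑(partialInner μ (ContinuousMap.toLp 2 ν 𝕜 v) (mulLp (μ.prod ν) k (tensorLp 𝕜 μ ν f g))) =ᵐ[μ]
      fun x => ∫ y, conj (v y) * (k (x, y) * (f x * g y)) ∂ν := by
  have hk : ∀ᵐ z ∂μ.prod ν, mulLp (μ.prod ν) k (tensorLp 𝕜 μ ν f g) z =
      k z * (f z.1 * g z.2) := by
    filter_upwards [coeFn_mulLp k (tensorLp 𝕜 μ ν f g), coeFn_tensorLp f g] with z hz hz'
    rw [hz, hz']
  filter_upwards [coeFn_partialInner (ContinuousMap.toLp 2 ν 𝕜 v)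
      (mulLp (μ.prod ν) k (tensorLp 𝕜 μ ν f g)),
    Measure.ae_ae_of_ae_prod hk] with x hx hkx
  rw [hx]
  refine integral_congr_ae ?_
  filter_upwards [hkx, ContinuousMap.coeFn_toLp (p := 2) (𝕜 := 𝕜) ν v] with y hy hv
  rw [hy, hv]

variable (μ ν) in
/-- The integral operator `g ↦ (x ↦ ∫ k (x, y) * g y dy)` with continuous kernel `k`. -/
def integralOp (k : C(X × Y, 𝕜)) : Lp 𝕜 2 ν →L[𝕜] Lp 𝕜 2 μ :=
  partialInner μ (ContinuousMap.toLp 2 ν 𝕜 1) ∘L mulLp (μ.prod ν) k ∘L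
    tensorLp 𝕜 μ ν (ContinuousMap.toLp 2 μ 𝕜 1)

theorem coeFn_integralOp (k : C(X × Y, 𝕜)) (g : Lp 𝕜 2 ν) :
    ⇑(integralOp μ ν k g) =ᵐ[μ] fun x => ∫ y, k (x, y) * g y ∂ν := by
  filter_upwards [coeFn_partialInner_mulLp_tensorLp 1 k (ContinuousMap.toLp 2 μ 𝕜 1) g,
    ContinuousMap.coeFn_toLp (p := 2) (𝕜 := 𝕜) μ (1 : C(X, 𝕜))] with x hx h1
  exact hx.trans (by simp only [h1, ContinuousMap.one_apply, map_one, one_mul])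

theorem tendsto_integralOp (k : C(X × Y, 𝕜)) {g : ℕ → Lp 𝕜 2 ν} (hg : IsWeaklyNull 𝕜 g) :
    Tendsto (fun n => integralOp μ ν k (g n)) atTop (𝓝 0) := by
  let κ : X → Lp 𝕜 2 ν := fun x => ContinuousMap.toLp 2 ν 𝕜 (star (k.curry x))
  have hκ (n : ℕ) : ⇑(integralOp μ ν k (g n)) =ᵐ[μ] fun x => inner 𝕜 (κ x) (g n) := by
    filter_upwards [coeFn_integralOp k (g n)] with x hx
    simp only [hx, κ, inner_toLp_left, ContinuousMap.star_apply, RCLike.star_def, RCLike.conj_conj,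
      ContinuousMap.curry_apply]
  have hκc : Continuous κ :=
    (ContinuousMap.toLp 2 ν 𝕜).continuous.comp (continuous_star.comp k.curry.continuous)
  obtain ⟨B, hB⟩ := (isCompact_range hκc).isBounded.exists_norm_le
  obtain ⟨C, hC⟩ := hg.exists_norm_le
  have hsq : Tendsto (fun n => ∫ x, ‖inner 𝕜 (κ x) (g n)‖ ^ 2 ∂μ) atTop (𝓝 (∫ _, 0 ∂μ)) := by
    refine tendsto_integral_of_dominated_convergence (fun _ => (B * C) ^ 2)
      (fun n => Continuous.aestronglyMeasurable (by fun_prop)) (integrable_const _)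
      (fun n => .of_forall fun x => ?_) (.of_forall fun x => ?_)
    · rw [norm_pow, norm_norm]
      gcongr
      refine (norm_inner_le_norm _ _).trans ?_
      have := hB _ (mem_range_self x)
      exact mul_le_mul this (hC n) (norm_nonneg _) ((norm_nonneg _).trans this)
    · simpa using (hg (κ x)).norm.pow 2
  have hnorm (n : ℕ) : ‖integralOp μ ν k (g n)‖ ^ 2 = ∫ x, ‖inner 𝕜 (κ x) (g n)‖ ^ 2 ∂μ := by
    rw [norm_sq_eq_integral]
    refine integral_congr_ae ?_
    filter_upwards [hκ n] with x hx
    rw [hx]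
  rw [tendsto_zero_iff_norm_tendsto_zero]
  have := hsq.sqrt
  simpa only [← hnorm, integral_zero, Real.sqrt_zero, Real.sqrt_sq (norm_nonneg _)] using this

end IntegralOperator

section KernelOperators

open scoped ComplexConjugate

variable {𝕜 X Y : Type*} [RCLike 𝕜]
  [TopologicalSpace X] [CompactSpace X] [TopologicalSpace Y] [CompactSpace Y]
  [MeasurableSpace Y] [BorelSpace Y]

/-- The continuous function `x ↦ ∫ k (x, y) dy` obtained by integrating out the second variable. -/
@[simps]
def fiberIntegral (ν : Measure Y) [IsFiniteMeasure ν] (k : C(X × Y, 𝕜)) : C(X, 𝕜) where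
  toFun x := ∫ y, k (x, y) ∂ν
  continuous_toFun := by
    refine (continuous_integral.comp
      ((ContinuousMap.toLp 1 ν 𝕜).continuous.comp k.curry.continuous)).congr fun x => ?_
    exact integral_congr_ae (ContinuousMap.coeFn_toLp ν (k.curry x))

variable [MeasurableSpace X] [BorelSpace X] [SecondCountableTopologyEither X Y]
  {μ : Measure X} [IsFiniteMeasure μ] {ν : Measure Y} [IsFiniteMeasure ν]

theorem partialInner_mulLp_tensorLp_toLp_right (u v : C(Y, 𝕜))
    (k : C(X × Y, 𝕜)) (g : Lp 𝕜 2 μ) :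
    partialInner μ (ContinuousMap.toLp 2 ν 𝕜 v)
        (mulLp (μ.prod ν) k (tensorLp 𝕜 μ ν g (ContinuousMap.toLp 2 ν 𝕜 u))) =
      mulLp μ (fiberIntegral ν (star (v.comp .snd) * k * u.comp .snd)) g := by
  refine Lp.ext ?_
  filter_upwards [coeFn_partialInner_mulLp_tensorLp v k g (ContinuousMap.toLp 2 ν 𝕜 u),
    coeFn_mulLp (fiberIntegral ν (star (v.comp .snd) * k * u.comp .snd)) g] with x hx hx'
  rw [hx, hx', fiberIntegral_apply, ← integral_mul_const]
  refine integral_congr_ae ?_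
  filter_upwards [ContinuousMap.coeFn_toLp (p := 2) (𝕜 := 𝕜) ν u] with y hy
  simp only [hy, ContinuousMap.mul_apply, ContinuousMap.star_apply, ContinuousMap.comp_apply,
    ContinuousMap.snd_apply, RCLike.star_def]
  ring

theorem partialInner_mulLp_tensorLp_toLp_left (u : C(X, 𝕜)) (v : C(Y, 𝕜)) (k : C(X × Y, 𝕜))
    (g : Lp 𝕜 2 ν) :
    partialInner μ (ContinuousMap.toLp 2 ν 𝕜 v)
        (mulLp (μ.prod ν) k (tensorLp 𝕜 μ ν (ContinuousMap.toLp 2 μ 𝕜 u) g)) =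
      integralOp μ ν (star (v.comp .snd) * k * u.comp .fst) g := by
  refine Lp.ext ?_
  filter_upwards [coeFn_partialInner_mulLp_tensorLp v k (ContinuousMap.toLp 2 μ 𝕜 u) g,
    coeFn_integralOp (star (v.comp .snd) * k * u.comp .fst) g,
    ContinuousMap.coeFn_toLp (p := 2) (𝕜 := 𝕜) μ u] with x hx hx' hu
  rw [hx, hx', hu]
  simp only [ContinuousMap.mul_apply, ContinuousMap.star_apply, ContinuousMap.comp_apply,
    ContinuousMap.snd_apply, ContinuousMap.fst_apply, RCLike.star_def, mul_assoc]

end KernelOperators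

section Concentration

variable {𝕜 X Y : Type*} [RCLike 𝕜] [TopologicalSpace X] [MeasurableSpace X]
  [TopologicalSpace Y] [MeasurableSpace Y] {μ : Measure X} {ν : Measure Y}

/-- A sequence of unit vectors of `L²(μ)` concentrates at `a` if its supports eventually enter
every neighbourhood of `a`. Such sequences are the singular sequences of multiplication
operators. -/
structure IsConcentrating (e : ℕ → Lp 𝕜 2 μ) (a : X) : Prop where
  norm_eq_one : ∀ n, ‖e n‖ = 1
  eventually_ae : ∀ U ∈ 𝓝 a, ∀ᶠ n in atTop, ∀ᵐ x ∂μ, x ∉ U → e n x = 0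

theorem exists_isConcentrating [FirstCountableTopology X] [OpensMeasurableSpace X]
    [IsFiniteMeasure μ] [μ.IsOpenPosMeasure] (a : X) :
    ∃ e : ℕ → Lp 𝕜 2 μ, IsConcentrating e a := by
  obtain ⟨U, hU⟩ := (𝓝 a).exists_antitone_basis
  let i (n : ℕ) : Lp 𝕜 2 μ :=
    indicatorConstLp 2 isOpen_interior.measurableSet (measure_ne_top μ (interior (U n))) 1
  have hi (n : ℕ) : i n ≠ 0 := by
    have hpos : 0 < μ.real (interior (U n)) := ENNReal.toReal_pos
      (isOpen_interior.measure_pos μ ⟨a, mem_interior_iff_mem_nhds.2 (hU.mem n)⟩).ne'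
      (measure_ne_top _ _)
    rw [← norm_ne_zero_iff, norm_indicatorConstLp two_ne_zero ENNReal.ofNat_ne_top]
    simpa using hpos.ne'
  refine ⟨fun n => ((‖i n‖⁻¹ : ℝ) : 𝕜) • i n, fun n => ?_, fun V hV => ?_⟩
  · simpa using norm_smul_inv_norm (𝕜 := 𝕜) (hi n)
  · filter_upwards [hU.eventually_subset hV] with n hn
    filter_upwards [Lp.coeFn_smul ((‖i n‖⁻¹ : ℝ) : 𝕜) (i n),
      indicatorConstLp_coeFn_notMem (μ := μ) (p := 2) (E := 𝕜)
        (hs := (isOpen_interior (s := U n)).measurableSet) (hμs := measure_ne_top _ _) (c := 1)]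
      with x hx hind hxV
    rw [hx, Pi.smul_apply, hind fun h => hxV (hn (interior_subset h)), smul_zero]

namespace IsConcentrating

variable {e : ℕ → Lp 𝕜 2 μ} {a : X} {h : ℕ → Lp 𝕜 2 ν} {b : Y}

theorem tensorLp [SFinite μ] [SFinite ν] (he : IsConcentrating e a) (hh : IsConcentrating h b) :
    IsConcentrating (fun n => tensorLp 𝕜 μ ν (e n) (h n)) (a, b) where
  norm_eq_one n := by rw [norm_tensorLp, he.norm_eq_one, hh.norm_eq_one, one_mul]
  eventually_ae U hU := by
    obtain ⟨V, hV, W, hW, hVW⟩ := mem_nhds_prod_iff.1 hU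
    filter_upwards [he.eventually_ae V hV, hh.eventually_ae W hW] with n hen hhn
    filter_upwards [coeFn_tensorLp (e n) (h n), Measure.quasiMeasurePreserving_fst.ae hen,
      Measure.quasiMeasurePreserving_snd.ae hhn] with z hz hez hhz hzU
    rw [hz, mul_eq_zero]
    by_contra! hne
    exact hzU (hVW ⟨not_not.1 (mt hez hne.1), not_not.1 (mt hhz hne.2)⟩)

theorem tendsto_mulLp [CompactSpace X] [BorelSpace X] [IsFiniteMeasure μ]
    (he : IsConcentrating e a) {m : C(X, 𝕜)} (hm : m a = 0) :
    Tendsto (fun n => mulLp μ m (e n)) atTop (𝓝 0) := by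
  refine Metric.tendsto_nhds.2 fun ε hε => ?_
  have hU : {x | ‖m x‖ < ε / 2} ∈ 𝓝 a :=
    m.continuous.norm.continuousAt.eventually_lt_const (by simpa [hm] using hε)
  filter_upwards [he.eventually_ae _ hU] with n hn
  have hle : ‖mulLp μ m (e n)‖ ≤ ε / 2 * ‖e n‖ := by
    refine Lp.norm_le_mul_norm_of_ae_le_mul ?_
    filter_upwards [coeFn_mulLp m (e n), hn] with x hx hxU
    rw [hx, norm_mul]
    by_cases hmem : ‖m x‖ < ε / 2
    · gcongr
    · simp [hxU hmem]
  rw [dist_zero_right]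
  rw [he.norm_eq_one] at hle
  linarith

theorem isWeaklyNull [OpensMeasurableSpace X] [μ.OuterRegular] (he : IsConcentrating e a)
    (ha : μ {a} = 0) : IsWeaklyNull 𝕜 e := by
  refine fun f => Metric.tendsto_nhds.2 fun ε hε => ?_
  obtain ⟨δ, hδ, hsmall⟩ := (Lp.memLp f).eLpNorm_indicator_le one_le_two ENNReal.ofNat_ne_top
    (half_pos hε)
  obtain ⟨U, haU, hUo, hμU⟩ := ({a} : Set X).exists_isOpen_lt_of_lt (μ := μ) (ENNReal.ofReal δ)
    (by simpa [ha] using hδ)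
  let fU : Lp 𝕜 2 μ := ((Lp.memLp f).indicator hUo.measurableSet).toLp
  have hfU : ‖fU‖ ≤ ε / 2 := by
    rw [Lp.norm_toLp]
    exact ENNReal.toReal_le_of_le_ofReal (half_pos hε).le (hsmall U hUo.measurableSet hμU.le)
  filter_upwards [he.eventually_ae U (hUo.mem_nhds (haU rfl))] with n hn
  have hinner : inner 𝕜 f (e n) = inner 𝕜 fU (e n) := by
    rw [L2.inner_def, L2.inner_def]
    refine integral_congr_ae ?_
    filter_upwards [hn, ((Lp.memLp f).indicator hUo.measurableSet).coeFn_toLp] with x hx hfx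
    by_cases hmem : x ∈ U
    · simp [fU, hfx, hmem]
    · simp [hx hmem]
  have hle := norm_inner_le_norm (𝕜 := 𝕜) fU (e n)
  rw [dist_zero_right, hinner]
  rw [he.norm_eq_one] at hle
  linarith

end IsConcentrating

end Concentration

section Components

/-- The element of `ℂ ⊕ L²(T^d) ⊕ L²_sym((T^d)²)` with the given components. -/
def mkH3 (a : ℂ) (g : L2 d) (F : L2sym d) : H3 d :=
  WithLp.toLp 2 (a, WithLp.toLp 2 (g, F))

theorem p2_mem_symSub (f : H3 d) : p2 f ∈ symSub d := Subtype.property _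

theorem H3_ext {f g : H3 d} (h₀ : p0 f = p0 g) (h₁ : p1 f = p1 g) (h₂ : p2 f = p2 g) : f = g :=
  WithLp.ofLp_injective 2 (Prod.ext h₀ (WithLp.ofLp_injective 2 (Prod.ext h₁ (Subtype.ext h₂))))

theorem Hkk_ext {f g : Hkk d} (h₁ : pk1 f = pk1 g) (h₂ : pk2 f = pk2 g) : f = g :=
  WithLp.ofLp_injective 2 (Prod.ext h₁ h₂)

theorem inner_H3 (f g : H3 d) :
    inner ℂ f g = inner ℂ (p0 f) (p0 g) + inner ℂ (p1 f) (p1 g) + inner ℂ (p2 f) (p2 g) := by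
  rw [WithLp.prod_inner_apply, WithLp.prod_inner_apply, ← add_assoc]
  rfl

theorem norm_sq_H3 (f : H3 d) : ‖f‖ ^ 2 = ‖p0 f‖ ^ 2 + ‖p1 f‖ ^ 2 + ‖p2 f‖ ^ 2 := by
  rw [WithLp.prod_norm_sq_eq_of_L2, WithLp.prod_norm_sq_eq_of_L2, ← add_assoc]
  rfl

theorem tendsto_zero_H3_iff {u : ℕ → H3 d} :
    Tendsto u atTop (𝓝 0) ↔ Tendsto (fun n => p0 (u n)) atTop (𝓝 0) ∧
      Tendsto (fun n => p1 (u n)) atTop (𝓝 0) ∧ Tendsto (fun n => p2 (u n)) atTop (𝓝 0) := by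
  refine ⟨fun hu => ?_, fun ⟨h₀, h₁, h₂⟩ => ?_⟩
  · have hle (n : ℕ) : ‖p0 (u n)‖ ≤ ‖u n‖ ∧ ‖p1 (u n)‖ ≤ ‖u n‖ ∧ ‖p2 (u n)‖ ≤ ‖u n‖ := by
      have hsq := norm_sq_H3 (u n)
      have h₀ := sq_nonneg (‖p0 (u n)‖)
      have h₁ := sq_nonneg (‖p1 (u n)‖)
      have h₂ := sq_nonneg (‖p2 (u n)‖)
      refine ⟨?_, ?_, ?_⟩ <;> refine le_of_sq_le_sq ?_ (norm_nonneg _) <;> linarith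
    have hnorm := tendsto_zero_iff_norm_tendsto_zero.1 hu
    exact ⟨squeeze_zero_norm (fun n => (hle n).1) hnorm,
      squeeze_zero_norm (fun n => (hle n).2.1) hnorm,
      squeeze_zero_norm (fun n => (hle n).2.2) hnorm⟩
  · have hsq := ((h₀.norm.pow 2).add (h₁.norm.pow 2)).add (h₂.norm.pow 2)
    rw [tendsto_zero_iff_norm_tendsto_zero]
    simpa [← norm_sq_H3, Real.sqrt_sq] using hsq.sqrt

theorem isWeaklyNull_H3 {u : ℕ → H3 d} (h₀ : IsWeaklyNull ℂ fun n => p0 (u n))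
    (h₁ : IsWeaklyNull ℂ fun n => p1 (u n)) (h₂ : IsWeaklyNull ℂ fun n => p2 (u n)) :
    IsWeaklyNull ℂ u := fun x => by
  simpa only [inner_H3, add_zero] using ((h₀ (p0 x)).add (h₁ (p1 x))).add (h₂ (p2 x))

theorem IsWeaklyNull.tendsto_p0 {u : ℕ → H3 d} (hu : IsWeaklyNull ℂ u) :
    Tendsto (fun n => p0 (u n)) atTop (𝓝 0) := by
  have h := hu (mkH3 1 0 0)
  simp only [inner_H3] at h
  simpa [mkH3, p0, p1, p2] using h

theorem IsWeaklyNull.isWeaklyNull_p1 {u : ℕ → H3 d} (hu : IsWeaklyNull ℂ u) :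
    IsWeaklyNull ℂ fun n => p1 (u n) := fun g => by
  have h := hu (mkH3 0 g 0)
  simp only [inner_H3] at h
  simpa [mkH3, p0, p1, p2] using h

end Components

section Swap

theorem mem_symSub_iff {F : L2two d} : F ∈ symSub d ↔ swapL d F = F := by
  rw [symSub, LinearMap.mem_ker, LinearMap.sub_apply, LinearMap.id_apply, sub_eq_zero]

theorem coeFn_swapL (F : L2two d) : ⇑(swapL d F) =ᵐ[volume] fun x => F x.swap :=
  Lp.coeFn_compMeasurePreserving F _

theorem inner_swapL_swapL (F G : L2two d) : inner ℂ (swapL d F) (swapL d G) = inner ℂ F G :=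
  (Lp.compMeasurePreservingₗᵢ ℂ Prod.swap Measure.measurePreserving_swap).inner_map_map F G

theorem swapL_tensorLp (f g : L2 d) :
    swapL d (tensorLp ℂ volume volume f g) = tensorLp ℂ volume volume g f := by
  refine Lp.ext ?_
  have hswap : Measure.QuasiMeasurePreserving (Prod.swap : Td d × Td d → Td d × Td d) :=
    Measure.measurePreserving_swap.quasiMeasurePreserving
  filter_upwards [coeFn_swapL (tensorLp ℂ volume volume f g), coeFn_tensorLp g f,
    hswap.ae (coeFn_tensorLp f g)] with x h₁ h₂ h₃
  rw [h₁, h₂]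
  exact h₃.trans (mul_comm _ _)

theorem mulLp_mem_symSub {m : C(Td d × Td d, ℂ)} (hm : ∀ x, m x.swap = m x) {F : L2two d}
    (hF : F ∈ symSub d) : mulLp volume m F ∈ symSub d := by
  rw [mem_symSub_iff] at hF ⊢
  refine Lp.ext ?_
  have hswap : Measure.QuasiMeasurePreserving (Prod.swap : Td d × Td d → Td d × Td d) :=
    Measure.measurePreserving_swap.quasiMeasurePreserving
  have hFx := coeFn_swapL F
  rw [hF] at hFx
  filter_upwards [coeFn_swapL (mulLp volume m F), coeFn_mulLp m F, hswap.ae (coeFn_mulLp m F), hFx]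
    with x h₁ h₂ h₃ h₄
  rw [h₁, h₂, h₃, hm, ← h₄]

end Swap

section FiberSymbols

/-- The coefficient functions of the operator matrix `H(K)` at a fixed `K`, on an arbitrary
space `X` in place of the torus. Complex values are allowed; the entries `H₀₁` and `H₁₂` then
involve the complex conjugates of `v₀` and `v₁`. -/
structure FiberSymbols (X : Type*) [TopologicalSpace X] where
  w₀ : ℂ
  v₀ : C(X, ℂ)
  v₁ : C(X, ℂ)
  w₁ : C(X, ℂ)
  w₂ : C(X × X, ℂ)
  w₂_swap : ∀ x, w₂ x.swap = w₂ x

namespace FiberSymbols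

variable {X : Type*} [TopologicalSpace X]

/-- The function `1 / (w₂ - z)`; it is junk when `z` is a value of `w₂`. -/
def resolventSymbol (s : FiberSymbols X) (z : ℂ) : C(X × X, ℂ) :=
  Ring.inverse (s.w₂ - algebraMap ℂ _ z)

section Resolvent

variable {s : FiberSymbols X} {z : ℂ}

theorem resolventSymbol_mul (hz : z ∉ range s.w₂) :
    s.resolventSymbol z * (s.w₂ - algebraMap ℂ _ z) = 1 := by
  refine Ring.inverse_mul_cancel _ (ContinuousMap.isUnit_iff_forall_ne_zero _ |>.2 fun x hx => ?_)
  exact hz ⟨x, sub_eq_zero.1 hx⟩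

theorem resolventSymbol_apply (hz : z ∉ range s.w₂) (x : X × X) :
    s.resolventSymbol z x = (s.w₂ x - z)⁻¹ :=
  eq_inv_of_mul_eq_one_left (DFunLike.congr_fun (resolventSymbol_mul hz) x)

theorem resolventSymbol_swap (hz : z ∉ range s.w₂) (x : X × X) :
    s.resolventSymbol z x.swap = s.resolventSymbol z x := by
  rw [resolventSymbol_apply hz, resolventSymbol_apply hz, s.w₂_swap]

end Resolvent

variable [CompactSpace X] [SecondCountableTopology X] [MeasureSpace X] [BorelSpace X]
  [IsFiniteMeasure (volume : Measure X)] (s : FiberSymbols X)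

/-- The vector of `L²(X)` represented by the coefficient `v₀`. -/
def v₀Lp : Lp ℂ 2 (volume : Measure X) := ContinuousMap.toLp 2 volume ℂ s.v₀

/-- The vector of `L²(X)` represented by the coefficient `v₁`. -/
def v₁Lp : Lp ℂ 2 (volume : Measure X) := ContinuousMap.toLp 2 volume ℂ s.v₁

/-- The entry `H₁₂*` of the operator matrix: symmetrised tensor product with `v₁`. -/
def creation : Lp ℂ 2 (volume : Measure X) →L[ℂ] Lp ℂ 2 (volume : Measure (X × X)) :=
  (1 / 2 : ℂ) • (tensorLp ℂ volume volume s.v₁Lp + (tensorLp ℂ volume volume).flip s.v₁Lp)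

/-- The entry `H₁₂` of the operator matrix, defined on all of `L²(X × X)`. -/
def annihilation : Lp ℂ 2 (volume : Measure (X × X)) →L[ℂ] Lp ℂ 2 (volume : Measure X) :=
  partialInner volume s.v₁Lp

/-- The part of `H₁₂ (H₂₂ - z)⁻¹ H₁₂*` that is an integral operator, with kernel
`v₁(p) conj(v₁(t)) / (2 (w₂(p, t) - z))`. -/
def exchange (z : ℂ) : Lp ℂ 2 (volume : Measure X) →L[ℂ] Lp ℂ 2 (volume : Measure X) :=
  (1 / 2 : ℂ) • integralOp volume volume
    (star (s.v₁.comp .snd) * s.resolventSymbol z * s.v₁.comp .fst)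

/-- The function `Δ_K(·; z)`. -/
def fredholmDet (z : ℂ) : C(X, ℂ) :=
  s.w₁ - algebraMap ℂ _ z - (1 / 2 : ℂ) •
    fiberIntegral volume (star (s.v₁.comp .snd) * s.resolventSymbol z * s.v₁.comp .snd)

/-- The Schur complement of `H₂₂ - z` in the lower right `2 × 2` block of `H - z`. -/
def schurComplement (z : ℂ) : Lp ℂ 2 (volume : Measure X) →L[ℂ] Lp ℂ 2 (volume : Measure X) :=
  mulLp volume (s.fredholmDet z) - s.exchange z

theorem creation_apply (g : Lp ℂ 2 (volume : Measure X)) : s.creation g =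
    (1 / 2 : ℂ) • (tensorLp ℂ volume volume s.v₁Lp g + tensorLp ℂ volume volume g s.v₁Lp) := rfl

theorem annihilation_mulLp_creation (z : ℂ) (g : Lp ℂ 2 (volume : Measure X)) :
    s.annihilation (mulLp volume (s.resolventSymbol z) (s.creation g)) =
      mulLp volume s.w₁ g - z • g - s.schurComplement z g := by
  let r := s.resolventSymbol z
  have hsum : s.annihilation (mulLp volume (s.resolventSymbol z) (s.creation g)) =
      (1 / 2 : ℂ) • (integralOp volume volume (star (s.v₁.comp .snd) * r * s.v₁.comp .fst) g +
        mulLp volume (fiberIntegral volume (star (s.v₁.comp .snd) * r * s.v₁.comp .snd)) g) := by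
    rw [← partialInner_mulLp_tensorLp_toLp_left, ← partialInner_mulLp_tensorLp_toLp_right,
      creation_apply, map_smul, map_smul, map_add, map_add]
    rfl
  have hdet : mulLp volume (s.fredholmDet z) g = mulLp volume s.w₁ g - z • g - (1 / 2 : ℂ) •
      mulLp volume (fiberIntegral volume (star (s.v₁.comp .snd) * r * s.v₁.comp .snd)) g := by
    rw [fredholmDet, mulLp_sub_apply, mulLp_sub_algebraMap_apply, mulLp_smul_apply]
  rw [hsum, schurComplement, sub_apply, hdet, exchange, smul_apply]
  module

theorem tendsto_exchange (z : ℂ) {g : ℕ → Lp ℂ 2 (volume : Measure X)}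
    (hg : IsWeaklyNull ℂ g) : Tendsto (fun n => s.exchange z (g n)) atTop (𝓝 0) := by
  have hlim := (tendsto_integralOp (μ := volume)
    (star (s.v₁.comp .snd) * s.resolventSymbol z * s.v₁.comp .fst) hg).const_smul (1 / 2 : ℂ)
  rwa [smul_zero] at hlim

variable {s} in
theorem mulLp_w₂_sub_smul_eq_iff {z : ℂ} (hz : z ∉ range s.w₂)
    {F G : Lp ℂ 2 (volume : Measure (X × X))} :
    mulLp volume s.w₂ F - z • F = G ↔ F = mulLp volume (s.resolventSymbol z) G := by
  rw [← mulLp_sub_algebraMap_apply]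
  exact mulLp_eq_iff_of_mul_eq_one (resolventSymbol_mul hz)

end FiberSymbols

end FiberSymbols

section FiberHamiltonian

namespace FiberSymbols

variable (s : FiberSymbols (Td d))

theorem creation_mem_symSub (g : L2 d) : s.creation g ∈ symSub d := by
  rw [mem_symSub_iff, creation_apply, map_smul, map_add, swapL_tensorLp, swapL_tensorLp, add_comm]

theorem inner_creation_right {F : L2two d} (hF : F ∈ symSub d) (g : L2 d) :
    inner ℂ F (s.creation g) = inner ℂ (s.annihilation F) g := by
  have hswap : inner ℂ F (tensorLp ℂ volume volume s.v₁Lp g) =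
      inner ℂ F (tensorLp ℂ volume volume g s.v₁Lp) := by
    rw [← inner_swapL_swapL, swapL_tensorLp, mem_symSub_iff.1 hF]
  rw [creation_apply, inner_smul_right, inner_add_right, hswap, annihilation,
    inner_partialInner_left]
  ring

/-- The vector of `ℂ ⊕ L²(T^d) ⊕ L²_sym((T^d)²)` extending `g` whose image under `H - z` has
vanishing two-particle component. -/
def lift {z : ℂ} (hz : z ∉ range s.w₂) (g : Hkk d) : H3 d :=
  mkH3 (pk1 g) (pk2 g) (-⟨mulLp volume (s.resolventSymbol z) (s.creation (pk2 g)),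
    mulLp_mem_symSub (resolventSymbol_swap hz) (s.creation_mem_symSub (pk2 g))⟩)

/-- `H` is the operator matrix with coefficients `s`. -/
structure IsFiberHamiltonian (H : H3 d →L[ℂ] H3 d) : Prop where
  p0_apply : ∀ f, p0 (H f) = s.w₀ * p0 f + inner ℂ s.v₀Lp (p1 f)
  p1_apply : ∀ f,
    p1 (H f) = p0 f • s.v₀Lp + mulLp volume s.w₁ (p1 f) + s.annihilation (p2 f)
  p2_apply : ∀ f, p2 (H f) = s.creation (p1 f) + mulLp volume s.w₂ (p2 f)

namespace IsFiberHamiltonian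

variable {s} {H : H3 d →L[ℂ] H3 d} (hH : s.IsFiberHamiltonian H)

include hH

theorem isSelfAdjoint (hw₀ : IsSelfAdjoint s.w₀) (hw₁ : IsSelfAdjoint s.w₁)
    (hw₂ : IsSelfAdjoint s.w₂) : IsSelfAdjoint H := by
  rw [ContinuousLinearMap.isSelfAdjoint_iff_isSymmetric]
  intro f g
  have h₂ := s.inner_creation_right (p2_mem_symSub f) (p1 g)
  have h₁ := congrArg (starRingEnd ℂ) (s.inner_creation_right (p2_mem_symSub g) (p1 f))
  rw [inner_conj_symm, inner_conj_symm] at h₁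
  rw [ContinuousLinearMap.coe_coe, inner_H3, inner_H3, hH.p0_apply, hH.p1_apply, hH.p2_apply,
    hH.p0_apply, hH.p1_apply, hH.p2_apply]
  simp only [inner_add_left, inner_add_right, inner_smul_left, inner_smul_right, h₁, h₂,
    inner_mulLp_left, hw₁.star_eq, hw₂.star_eq, RCLike.inner_apply, map_add, map_mul,
    inner_conj_symm]
  rw [starRingEnd_apply s.w₀, hw₀.star_eq]
  ring

variable {z : ℂ} (f : H3 d)

theorem p0_residual (z : ℂ) :
    p0 (H f - z • f) = (s.w₀ - z) * p0 f + inner ℂ s.v₀Lp (p1 f) := by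
  change p0 (H f) - z * p0 f = _
  rw [hH.p0_apply]
  ring

theorem p2_eq (hz : z ∉ range s.w₂) :
    p2 f = mulLp volume (s.resolventSymbol z) (p2 (H f - z • f) - s.creation (p1 f)) := by
  rw [← mulLp_w₂_sub_smul_eq_iff hz]
  change _ = p2 (H f) - z • p2 f - _
  rw [hH.p2_apply]
  abel

theorem p1_residual (hz : z ∉ range s.w₂) :
    p1 (H f - z • f) = p0 f • s.v₀Lp + s.schurComplement z (p1 f) +
      s.annihilation (mulLp volume (s.resolventSymbol z) (p2 (H f - z • f))) := by
  change p1 (H f) - z • p1 f = _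
  rw [hH.p1_apply, hH.p2_eq f hz, map_sub, map_sub, annihilation_mulLp_creation]
  abel

theorem p2_residual_lift (hz : z ∉ range s.w₂) (g : Hkk d) :
    p2 (H (s.lift hz g) - z • s.lift hz g) = 0 := by
  have hlift : p2 (s.lift hz g) =
      mulLp volume (s.resolventSymbol z) (-s.creation (pk2 g)) := (map_neg _ _).symm
  change p2 (H (s.lift hz g)) - z • p2 (s.lift hz g) = 0
  rw [hH.p2_apply, add_sub_assoc, (mulLp_w₂_sub_smul_eq_iff hz).2 hlift]
  exact add_neg_cancel _

theorem exists_eigenvector_iff (hz : z ∉ range s.w₂) : (∃ f, f ≠ 0 ∧ H f = z • f) ↔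
    ∃ g : Hkk d, g ≠ 0 ∧ (s.w₀ - z) * pk1 g + inner ℂ s.v₀Lp (pk2 g) = 0 ∧
      pk1 g • s.v₀Lp + s.schurComplement z (pk2 g) = 0 := by
  constructor
  · rintro ⟨f, hf, hHf⟩
    have hρ : H f - z • f = 0 := sub_eq_zero.2 hHf
    have h₀ := hH.p0_residual f z
    have h₁ := hH.p1_residual f hz
    have h₂ := hH.p2_eq f hz
    rw [hρ] at h₀ h₁ h₂
    refine ⟨WithLp.toLp 2 (p0 f, p1 f), fun hg => hf ?_, h₀.symm, ?_⟩
    · have hp0 : p0 f = 0 := congrArg pk1 hg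
      have hp1 : p1 f = 0 := congrArg pk2 hg
      refine H3_ext hp0 hp1 (h₂.trans ?_)
      rw [hp1, map_zero]
      exact (congrArg _ (sub_zero _)).trans (map_zero _)
    · refine (h₁.trans ?_).symm
      have hp2 : p2 (0 : H3 d) = 0 := rfl
      rw [hp2, map_zero, map_zero, add_zero]
      rfl
  · rintro ⟨g, hg, h₀, h₁⟩
    refine ⟨s.lift hz g, fun h => hg (Hkk_ext (congrArg p0 h) (congrArg p1 h)), ?_⟩
    have h₂ := hH.p2_residual_lift hz g
    refine sub_eq_zero.1 (H3_ext ((hH.p0_residual _ z).trans h₀) ?_ h₂)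
    rw [hH.p1_residual _ hz, h₂, map_zero, map_zero, add_zero]
    exact h₁

end IsFiberHamiltonian

end FiberSymbols

end FiberHamiltonian

section EssentialSpectrumOfFiber

theorem volume_singleton_Td (hd : 1 ≤ d) (a : Td d) : volume {a} = 0 := by
  have : NullSingletonClass (volume : Measure (AddCircle (2 * Real.pi))) := ⟨fun x => by
    rw [← Metric.closedBall_zero, AddCircle.volume_closedBall]
    simp [Real.pi_nonneg]⟩
  have : NullSingletonClass (volume : Measure (Td d)) := Measure.pi_nullSingletonClass ⟨0, hd⟩
  exact measure_singleton a

theorem volume_singleton_Td_prod (hd : 1 ≤ d) (a : Td d × Td d) : volume {a} = 0 := by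
  rw [← singleton_prod_singleton (a := a.1) (b := a.2), Measure.volume_eq_prod, Measure.prod_prod,
    volume_singleton_Td hd, zero_mul]

/-- The symmetrised tensor product `f ⊗ g + g ⊗ f`, without the customary factor `1 / 2`. -/
def symTensor (f g : L2 d) : L2sym d :=
  ⟨tensorLp ℂ volume volume f g + tensorLp ℂ volume volume g f, by
    rw [mem_symSub_iff, map_add, swapL_tensorLp, swapL_tensorLp, add_comm]⟩

theorem coe_symTensor (f g : L2 d) : (symTensor f g : L2two d) =
    tensorLp ℂ volume volume f g + tensorLp ℂ volume volume g f := rfl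

theorem one_le_norm_symTensor {f g : L2 d} (hf : ‖f‖ = 1) (hg : ‖g‖ = 1) :
    1 ≤ ‖(symTensor f g : L2two d)‖ := by
  have hone : ‖tensorLp ℂ volume volume f g‖ = 1 := by rw [norm_tensorLp, hf, hg, one_mul]
  have hinner : inner ℂ (tensorLp ℂ volume volume f g) (symTensor f g : L2two d) =
      ((1 + ‖inner ℂ f g‖ ^ 2 : ℝ) : ℂ) := by
    rw [coe_symTensor, inner_add_right, inner_tensorLp_tensorLp, inner_tensorLp_tensorLp,
      inner_self_eq_norm_sq_to_K, inner_self_eq_norm_sq_to_K, hf, hg, ← inner_conj_symm g f,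
      RCLike.mul_conj]
    norm_num
  calc 1 ≤ 1 + ‖inner ℂ f g‖ ^ 2 := le_add_of_nonneg_right (sq_nonneg _)
    _ = ‖inner ℂ (tensorLp ℂ volume volume f g) (symTensor f g : L2two d)‖ := by
        rw [hinner, Complex.norm_of_nonneg (by positivity)]
    _ ≤ ‖(symTensor f g : L2two d)‖ := by
        simpa [hone] using norm_inner_le_norm (𝕜 := ℂ) (tensorLp ℂ volume volume f g)
          (symTensor f g : L2two d)

section Concentrating

variable {e h : ℕ → L2 d} {a b : Td d} (he : IsConcentrating e a) (hh : IsConcentrating h b)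

include he hh

theorem isWeaklyNull_symTensor (hd : 1 ≤ d) :
    IsWeaklyNull ℂ fun n => (symTensor (e n) (h n) : L2two d) := by
  have := Measure.WeaklyRegular.of_pseudoMetrizableSpace_of_isFiniteMeasure
    (volume : Measure (Td d × Td d))
  exact ((he.tensorLp hh).isWeaklyNull (volume_singleton_Td_prod hd _)).add
    ((hh.tensorLp he).isWeaklyNull (volume_singleton_Td_prod hd _))

theorem tendsto_partialInner_tensorLp (hd : 1 ≤ d) (v : L2 d) :
    Tendsto (fun n => partialInner volume v (tensorLp ℂ volume volume (e n) (h n)))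
      atTop (𝓝 0) := by
  refine squeeze_zero_norm (fun n => ?_) (tendsto_zero_iff_norm_tendsto_zero.1
    (hh.isWeaklyNull (volume_singleton_Td hd b) v))
  rw [partialInner_tensorLp, norm_smul, he.norm_eq_one, mul_one]

theorem FiberSymbols.tendsto_annihilation_symTensor (s : FiberSymbols (Td d)) (hd : 1 ≤ d) :
    Tendsto (fun n => s.annihilation (symTensor (e n) (h n))) atTop (𝓝 0) := by
  have hlim := (tendsto_partialInner_tensorLp he hh hd s.v₁Lp).add
    (tendsto_partialInner_tensorLp hh he hd s.v₁Lp)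
  rw [add_zero] at hlim
  exact hlim.congr fun n => (map_add _ _ _).symm

theorem FiberSymbols.tendsto_mulLp_w₂_symTensor (s : FiberSymbols (Td d)) :
    Tendsto (fun n => mulLp volume s.w₂ (symTensor (e n) (h n)) -
      s.w₂ (a, b) • (symTensor (e n) (h n) : L2two d)) atTop (𝓝 0) := by
  let m : C(Td d × Td d, ℂ) := s.w₂ - algebraMap ℂ _ (s.w₂ (a, b))
  have hab : m (a, b) = 0 := sub_self _
  have hba : m (b, a) = 0 := sub_eq_zero.2 (s.w₂_swap (a, b))
  have hlim := ((he.tensorLp hh).tendsto_mulLp hab).add ((hh.tensorLp he).tendsto_mulLp hba)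
  rw [add_zero] at hlim
  refine hlim.congr fun n => ?_
  rw [← mulLp_sub_algebraMap_apply]
  exact (map_add _ _ _).symm

end Concentrating

namespace FiberSymbols.IsFiberHamiltonian

variable {s : FiberSymbols (Td d)} {H : H3 d →L[ℂ] H3 d} (hH : s.IsFiberHamiltonian H) {z : ℂ}

include hH

theorem notMem_essSpec (hz : z ∉ range s.w₂) (hΔ : IsUnit (s.fredholmDet z)) :
    z ∉ essSpec H := by
  rw [notMem_essSpec_iff]
  intro u hu hρ
  let r := mulLp volume (s.resolventSymbol z)
  obtain ⟨-, hρ₁, hρ₂⟩ := tendsto_zero_H3_iff.1 hρ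
  have h₀ : Tendsto (fun n => p0 (u n)) atTop (𝓝 0) := hu.tendsto_p0
  have hr₂ : Tendsto (fun n => s.annihilation (r (p2 (H (u n) - z • u n)))) atTop (𝓝 0) :=
    ((s.annihilation ∘L r).continuous.tendsto' 0 0 (map_zero _)).comp hρ₂
  have h₁ : Tendsto (fun n => p1 (u n)) atTop (𝓝 0) := by
    refine tendsto_zero_of_tendsto_mulLp hΔ ?_
    have hlim := ((hρ₁.sub (h₀.smul_const s.v₀Lp)).add
      (s.tendsto_exchange z hu.isWeaklyNull_p1)).sub hr₂
    rw [zero_smul, sub_zero, add_zero, sub_zero] at hlim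
    refine hlim.congr fun n => ?_
    rw [hH.p1_residual _ hz, schurComplement, sub_apply]
    abel
  have h₂ : Tendsto (fun n => p2 (u n)) atTop (𝓝 0) := by
    have hJ := (s.creation.continuous.tendsto' 0 0 (map_zero _)).comp h₁
    have hdiff := hρ₂.sub hJ
    rw [sub_zero] at hdiff
    exact ((r.continuous.tendsto' 0 0 (map_zero _)).comp hdiff).congr fun n =>
      (hH.p2_eq _ hz).symm
  exact tendsto_zero_H3_iff.2 ⟨h₀, h₁, h₂⟩

theorem mem_essSpec_of_fredholmDet_eq_zero (hd : 1 ≤ d) (hz : z ∉ range s.w₂) {k : Td d}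
    (hk : s.fredholmDet z k = 0) : z ∈ essSpec H := by
  obtain ⟨e, he⟩ := exists_isConcentrating (𝕜 := ℂ) (μ := volume) k
  have hweak : IsWeaklyNull ℂ e := he.isWeaklyNull (volume_singleton_Td hd k)
  let g (n : ℕ) : Hkk d := WithLp.toLp 2 (0, e n)
  by_contra hess
  have hlift : Tendsto (fun n => s.lift hz (g n)) atTop (𝓝 0) := by
    refine notMem_essSpec_iff.1 hess _ (isWeaklyNull_H3 (fun a => ?_) hweak ?_)
      (tendsto_zero_H3_iff.2 ⟨?_, ?_, ?_⟩)
    · exact tendsto_const_nhds.congr fun _ => (inner_zero_right a).symm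
    · exact hweak.map (-(mulLp volume (s.resolventSymbol z) ∘L s.creation))
    · refine (hweak s.v₀Lp).congr fun n => ?_
      rw [hH.p0_residual, show p0 (s.lift hz (g n)) = 0 from rfl, mul_zero, zero_add]
      rfl
    · have hS := (he.tendsto_mulLp hk).sub (s.tendsto_exchange z hweak)
      rw [sub_zero] at hS
      refine hS.congr fun n => ?_
      rw [hH.p1_residual _ hz, hH.p2_residual_lift hz, map_zero, map_zero, add_zero,
        show p0 (s.lift hz (g n)) = 0 from rfl, zero_smul, zero_add]
      rfl
    · exact tendsto_const_nhds.congr fun n => (hH.p2_residual_lift hz (g n)).symm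
  have hnorm : Tendsto (fun n => ‖e n‖) atTop (𝓝 ‖(0 : L2 d)‖) :=
    (tendsto_zero_H3_iff.1 hlift).2.1.norm
  simp [he.norm_eq_one] at hnorm

theorem mem_essSpec_of_mem_range (hd : 1 ≤ d) (hz : z ∈ range s.w₂) : z ∈ essSpec H := by
  obtain ⟨x, rfl⟩ := hz
  obtain ⟨e, he⟩ := exists_isConcentrating (𝕜 := ℂ) (μ := volume) x.1
  obtain ⟨h, hh⟩ := exists_isConcentrating (𝕜 := ℂ) (μ := volume) x.2
  let F (n : ℕ) : L2sym d := symTensor (e n) (h n)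
  let u (n : ℕ) : H3 d := mkH3 0 0 (F n)
  by_contra hess
  have hu : Tendsto u atTop (𝓝 0) := by
    refine notMem_essSpec_iff.1 hess _ (isWeaklyNull_H3 (fun a => ?_) (fun g => ?_)
      (isWeaklyNull_symTensor he hh hd)) (tendsto_zero_H3_iff.2 ⟨?_, ?_, ?_⟩)
    · exact tendsto_const_nhds.congr fun _ => (inner_zero_right a).symm
    · exact tendsto_const_nhds.congr fun _ => (inner_zero_right g).symm
    · refine tendsto_const_nhds.congr fun n => ?_
      rw [hH.p0_residual, show p0 (u n) = 0 from rfl, show p1 (u n) = 0 from rfl, mul_zero,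
        inner_zero_right, add_zero]
    · refine (s.tendsto_annihilation_symTensor he hh hd).congr fun n => ?_
      change s.annihilation (p2 (u n)) = p1 (H (u n)) - s.w₂ x • p1 (u n)
      rw [hH.p1_apply, show p0 (u n) = 0 from rfl, show p1 (u n) = 0 from rfl, zero_smul,
        map_zero, smul_zero, sub_zero, zero_add, zero_add]
    · refine (s.tendsto_mulLp_w₂_symTensor he hh).congr fun n => ?_
      change mulLp volume s.w₂ (p2 (u n)) - s.w₂ x • p2 (u n) =
        p2 (H (u n)) - s.w₂ x • p2 (u n)
      rw [hH.p2_apply, show p1 (u n) = 0 from rfl, map_zero, zero_add]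
  have hle : (1 : ℝ) ≤ ‖(0 : L2two d)‖ :=
    ge_of_tendsto (tendsto_zero_H3_iff.1 hu).2.2.norm
      (.of_forall fun n => one_le_norm_symTensor (he.norm_eq_one n) (hh.norm_eq_one n))
  exact not_lt_of_ge hle (by simp)

theorem mem_essSpec_iff (hd : 1 ≤ d) :
    z ∈ essSpec H ↔ z ∈ range s.w₂ ∨ ∃ k, s.fredholmDet z k = 0 := by
  by_cases hz : z ∈ range s.w₂
  · exact iff_of_true (hH.mem_essSpec_of_mem_range hd hz) (.inl hz)
  · refine ⟨fun h => .inr ?_, fun h => ?_⟩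
    · by_contra! hΔ
      exact hH.notMem_essSpec hz ((ContinuousMap.isUnit_iff_forall_ne_zero _).2 hΔ) h
    · obtain ⟨k, hk⟩ := h.resolve_left hz
      exact hH.mem_essSpec_of_fredholmDet_eq_zero hd hz hk

end FiberSymbols.IsFiberHamiltonian

end EssentialSpectrumOfFiber

section RealCoefficients

theorem image_ofReal_Icc_iInf_iSup {X : Type*} [TopologicalSpace X] [CompactSpace X]
    [ConnectedSpace X] {f : X → ℝ} (hf : Continuous f) :
    Complex.ofReal '' Icc (⨅ x, f x) (⨆ x, f x) = range fun x => (f x : ℂ) := by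
  rw [range_comp' Complex.ofReal f,
    eq_Icc_of_connected_compact (isConnected_range hf) (isCompact_range hf)]
  rfl

variable {w₀ v₀ v₁ : Td d → ℝ} {w₁ : Td d → Td d → ℝ} {w₂ : Td d → Td d → Td d → ℝ} {K : Td d}

/-- `s` consists of the given real coefficient functions at quasimomentum `K`, viewed as complex
functions. -/
structure FiberSymbols.IsFiberAt (s : FiberSymbols (Td d)) (w₀ v₀ v₁ : Td d → ℝ)
    (w₁ : Td d → Td d → ℝ) (w₂ : Td d → Td d → Td d → ℝ) (K : Td d) : Prop where
  w₀_eq : s.w₀ = w₀ K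
  v₀_apply : ∀ p, s.v₀ p = v₀ p
  v₁_apply : ∀ p, s.v₁ p = v₁ p
  w₁_apply : ∀ p, s.w₁ p = w₁ K p
  w₂_apply : ∀ p q, s.w₂ (p, q) = w₂ K p q

theorem FiberSymbols.exists_isFiberAt (hv₀ : Continuous v₀) (hv₁ : Continuous v₁)
    (hw₁ : Continuous (w₁ K)) (hw₂ : Continuous fun x : Td d × Td d => w₂ K x.1 x.2)
    (hsym : ∀ p q, w₂ K p q = w₂ K q p) :
    ∃ s : FiberSymbols (Td d), s.IsFiberAt w₀ v₀ v₁ w₁ w₂ K :=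
  ⟨{ w₀ := w₀ K
     v₀ := ⟨fun p => v₀ p, by fun_prop⟩
     v₁ := ⟨fun p => v₁ p, by fun_prop⟩
     w₁ := ⟨fun p => w₁ K p, by fun_prop⟩
     w₂ := ⟨fun x => w₂ K x.1 x.2, by fun_prop⟩
     w₂_swap := fun x => congrArg Complex.ofReal (hsym x.2 x.1) },
    ⟨rfl, fun _ => rfl, fun _ => rfl, fun _ => rfl, fun _ _ => rfl⟩⟩

namespace FiberSymbols.IsFiberAt

open scoped ComplexConjugate

variable {s : FiberSymbols (Td d)} (hs : s.IsFiberAt w₀ v₀ v₁ w₁ w₂ K) {z : ℂ}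

include hs

theorem range_w₂ : range s.w₂ = bigBand w₂ K := by
  have hw₂ : ⇑s.w₂ = fun x => (w₂ K x.1 x.2 : ℂ) := funext fun x => hs.w₂_apply x.1 x.2
  have hcont : Continuous fun x : Td d × Td d => w₂ K x.1 x.2 :=
    isometry_ofReal.comp_continuous_iff.1 (s.w₂.continuous.congr fun x => hs.w₂_apply x.1 x.2)
  rw [hw₂]
  exact (image_ofReal_Icc_iInf_iSup hcont).symm

theorem bandKk_subset (k : Td d) : bandKk w₂ K k ⊆ range s.w₂ := by
  have hcont : Continuous fun q => w₂ K k q := isometry_ofReal.comp_continuous_iff.1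
    ((s.w₂.continuous.comp (Continuous.prodMk_right k)).congr (hs.w₂_apply k))
  rw [bandKk, Emin, Emax, image_ofReal_Icc_iInf_iSup hcont]
  exact range_subset_iff.2 fun q => ⟨(k, q), hs.w₂_apply k q⟩

theorem fredholmDet_apply (hz : z ∉ range s.w₂) (k : Td d) :
    s.fredholmDet z k = Delta v₁ w₁ w₂ K k z := by
  change s.w₁ k - z - (1 / 2 : ℂ) * ∫ t, conj (s.v₁ t) * s.resolventSymbol z (k, t) * s.v₁ t = _
  simp only [resolventSymbol_apply hz, hs.w₁_apply, hs.v₁_apply, hs.w₂_apply, conj_ofReal, Delta]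
  refine congrArg (_ - _ * ·) (integral_congr_ae (.of_forall fun t => ?_))
  ring

theorem mem_SigK_iff :
    z ∈ SigK v₁ w₁ w₂ K ↔ z ∈ range s.w₂ ∨ ∃ k, s.fredholmDet z k = 0 := by
  rw [SigK, ← hs.range_w₂, mem_union]
  refine or_congr_right' fun hz => exists_congr fun k => ?_
  rw [hs.fredholmDet_apply hz, and_iff_right fun h => hz (hs.bandKk_subset k h)]

theorem inner_v₀Lp (f : L2 d) : inner ℂ s.v₀Lp f = ∫ t, (v₀ t : ℂ) * f t := by
  simp only [v₀Lp, inner_toLp_left, hs.v₀_apply, conj_ofReal]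

theorem coeFn_v₀Lp : ⇑s.v₀Lp =ᵐ[volume] fun p => (v₀ p : ℂ) :=
  (ContinuousMap.coeFn_toLp volume s.v₀).trans (.of_forall hs.v₀_apply)

theorem coeFn_v₁Lp : ⇑s.v₁Lp =ᵐ[volume] fun p => (v₁ p : ℂ) :=
  (ContinuousMap.coeFn_toLp volume s.v₁).trans (.of_forall hs.v₁_apply)

theorem coeFn_annihilation (F : L2two d) :
    ⇑(s.annihilation F) =ᵐ[volume] fun p => ∫ t, (v₁ t : ℂ) * F (p, t) := by
  filter_upwards [coeFn_partialInner (μ := volume) s.v₁Lp F] with p hp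
  refine hp.trans (integral_congr_ae ?_)
  filter_upwards [hs.coeFn_v₁Lp] with t ht
  rw [ht, conj_ofReal]

theorem coeFn_creation (g : L2 d) : ⇑(s.creation g) =ᵐ[volume] fun x : Td d × Td d =>
    ((v₁ x.1 : ℂ) * g x.2 + (v₁ x.2 : ℂ) * g x.1) / 2 := by
  rw [creation_apply]
  filter_upwards [Lp.coeFn_smul (1 / 2 : ℂ) (tensorLp ℂ volume volume s.v₁Lp g +
      tensorLp ℂ volume volume g s.v₁Lp),
    Lp.coeFn_add (tensorLp ℂ volume volume s.v₁Lp g) (tensorLp ℂ volume volume g s.v₁Lp),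
    coeFn_tensorLp s.v₁Lp g, coeFn_tensorLp g s.v₁Lp,
    Measure.quasiMeasurePreserving_fst.ae hs.coeFn_v₁Lp,
    Measure.quasiMeasurePreserving_snd.ae hs.coeFn_v₁Lp] with x hsmul hadd h₁ h₂ hfst hsnd
  rw [hsmul, Pi.smul_apply, hadd, Pi.add_apply, h₁, h₂, hfst, hsnd, smul_eq_mul]
  ring

theorem isFiberHamiltonian {H : H3 d →L[ℂ] H3 d} (hH : IsHamiltonian w₀ v₀ v₁ w₁ w₂ K H) :
    s.IsFiberHamiltonian H where
  p0_apply f := by rw [(hH f).1, hs.w₀_eq, hs.inner_v₀Lp]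
  p1_apply f := by
    refine Lp.ext ?_
    filter_upwards [(hH f).2.1, Lp.coeFn_add (p0 f • s.v₀Lp + mulLp volume s.w₁ (p1 f))
      (s.annihilation (p2 f)), Lp.coeFn_add (p0 f • s.v₀Lp) (mulLp volume s.w₁ (p1 f)),
      Lp.coeFn_smul (p0 f) s.v₀Lp, hs.coeFn_v₀Lp, coeFn_mulLp s.w₁ (p1 f),
      hs.coeFn_annihilation (p2 f)] with p hp hadd hadd' hsmul hv₀ hw₁ hA
    rw [hp, hadd, Pi.add_apply, hadd', Pi.add_apply, hsmul, Pi.smul_apply, hv₀, hw₁, hA,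
      hs.w₁_apply, smul_eq_mul, mul_comm (p0 f)]
  p2_apply f := by
    refine Lp.ext ?_
    filter_upwards [(hH f).2.2, Lp.coeFn_add (s.creation (p1 f)) (mulLp volume s.w₂ (p2 f)),
      hs.coeFn_creation (p1 f), coeFn_mulLp s.w₂ (p2 f)] with x hx hadd hJ hw₂
    rw [hx, hadd, Pi.add_apply, hJ, hw₂, hs.w₂_apply]

theorem isSelfAdjoint {H : H3 d →L[ℂ] H3 d} (hH : IsHamiltonian w₀ v₀ v₁ w₁ w₂ K H) :
    IsSelfAdjoint H := by
  refine (hs.isFiberHamiltonian hH).isSelfAdjoint ?_ (ContinuousMap.ext fun p => ?_)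
    (ContinuousMap.ext fun x => ?_)
  · rw [hs.w₀_eq]
    exact conj_ofReal _
  · rw [ContinuousMap.star_apply, hs.w₁_apply]
    exact conj_ofReal _
  · rw [ContinuousMap.star_apply, hs.w₂_apply]
    exact conj_ofReal _

theorem coeFn_exchange (hz : z ∉ range s.w₂) (g : L2 d) : ⇑(s.exchange z g) =ᵐ[volume] fun p =>
    (v₁ p : ℂ) / 2 * ∫ t, (v₁ t : ℂ) * g t / ((w₂ K p t : ℂ) - z) := by
  let k : C(Td d × Td d, ℂ) := star (s.v₁.comp .snd) * s.resolventSymbol z * s.v₁.comp .fst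
  have hk (p t : Td d) : k (p, t) = v₁ p * (v₁ t / (w₂ K p t - z)) := by
    change conj (s.v₁ t) * s.resolventSymbol z (p, t) * s.v₁ p = _
    rw [resolventSymbol_apply hz, hs.v₁_apply, hs.v₁_apply, hs.w₂_apply, conj_ofReal]
    ring
  rw [exchange, smul_apply]
  filter_upwards [Lp.coeFn_smul (1 / 2 : ℂ) (integralOp volume volume k g),
    coeFn_integralOp k g] with p hsmul hp
  rw [hsmul, Pi.smul_apply, hp, smul_eq_mul, div_mul_eq_mul_div, ← integral_const_mul,
    ← integral_const_mul, ← integral_div]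
  congr! 2 with t
  rw [hk]
  ring

theorem mulLp_fredholmDet_pk2 (hz : z ∉ SigK v₁ w₁ w₂ K) {T : Hkk d →L[ℂ] Hkk d}
    (hT : IsTOp w₀ v₀ v₁ w₁ w₂ K z T) (g : Hkk d) :
    mulLp volume (s.fredholmDet z) (pk2 (T g)) =
      s.exchange z (pk2 g) - pk1 g • s.v₀Lp := by
  rw [hs.mem_SigK_iff, not_or, not_exists] at hz
  obtain ⟨hz, hΔ⟩ := hz
  refine Lp.ext ?_
  filter_upwards [coeFn_mulLp (s.fredholmDet z) (pk2 (T g)), (hT g).2,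
    Lp.coeFn_sub (s.exchange z (pk2 g)) (pk1 g • s.v₀Lp), Lp.coeFn_smul (pk1 g) s.v₀Lp,
    hs.coeFn_v₀Lp, hs.coeFn_exchange hz (pk2 g)] with p hmul hp hsub hsmul hv₀ hex
  have hΔp : Delta v₁ w₁ w₂ K p z ≠ 0 := hs.fredholmDet_apply hz p ▸ hΔ p
  rw [hmul, hp, hsub, Pi.sub_apply, hsmul, Pi.smul_apply, hv₀, hex, hs.fredholmDet_apply hz,
    smul_eq_mul]
  field_simp
  ring

theorem fixedPoint_iff (hz : z ∉ SigK v₁ w₁ w₂ K) {T : Hkk d →L[ℂ] Hkk d}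
    (hT : IsTOp w₀ v₀ v₁ w₁ w₂ K z T) (g : Hkk d) :
    T g = g ↔ (s.w₀ - z) * pk1 g + inner ℂ s.v₀Lp (pk2 g) = 0 ∧
      pk1 g • s.v₀Lp + s.schurComplement z (pk2 g) = 0 := by
  have hΔ : IsUnit (s.fredholmDet z) := (ContinuousMap.isUnit_iff_forall_ne_zero _).2
    fun k hk => hz (hs.mem_SigK_iff.2 (.inr ⟨k, hk⟩))
  obtain ⟨m, hm⟩ := hΔ.exists_left_inv
  have h₁ : pk1 (T g) = pk1 g ↔ (s.w₀ - z) * pk1 g + inner ℂ s.v₀Lp (pk2 g) = 0 := by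
    rw [(hT g).1, ← hs.w₀_eq, ← hs.inner_v₀Lp, ← sub_eq_zero]
    ring_nf
  have h₂ : pk2 (T g) = pk2 g ↔ pk1 g • s.v₀Lp + s.schurComplement z (pk2 g) = 0 := by
    rw [(mulLp_eq_iff_of_mul_eq_one hm).1 (hs.mulLp_fredholmDet_pk2 hz hT g), eq_comm,
      ← mulLp_eq_iff_of_mul_eq_one hm, ← sub_eq_zero, schurComplement, sub_apply,
      sub_sub_eq_add_sub, add_comm, add_sub_assoc]
  rw [← h₁, ← h₂]
  exact ⟨fun h => ⟨congrArg pk1 h, congrArg pk2 h⟩, fun h => Hkk_ext h.1 h.2⟩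

end FiberSymbols.IsFiberAt

end RealCoefficients

theorem discSpec_eq_T_fixed_points_general
    (d : ℕ) (hd : 1 ≤ d)
    (w₀ v₀ v₁ : Td d → ℝ) (w₁ : Td d → Td d → ℝ) (w₂ : Td d → Td d → Td d → ℝ) (K : Td d)
    (hv₀ : Continuous v₀) (hv₁ : Continuous v₁) (hw₁ : Continuous (w₁ K))
    (hw₂ : Continuous fun x : Td d × Td d => w₂ K x.1 x.2)
    (hsym : ∀ p q : Td d, w₂ K p q = w₂ K q p)
    (H : H3 d →L[ℂ] H3 d) (hH : IsHamiltonian w₀ v₀ v₁ w₁ w₂ K H)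
    (T : ℂ → Hkk d →L[ℂ] Hkk d)
    (hT : ∀ z ∉ SigK v₁ w₁ w₂ K, IsTOp w₀ v₀ v₁ w₁ w₂ K z (T z)) :
    spectrum ℂ H \ essSpec H =
      {z : ℂ | z ∉ SigK v₁ w₁ w₂ K ∧ ∃ g : Hkk d, g ≠ 0 ∧ T z g = g} ∧
    ∀ z ∉ SigK v₁ w₁ w₂ K, (z ∈ spectrum ℂ H ↔ ∃ g : Hkk d, g ≠ 0 ∧ T z g = g) := by
  obtain ⟨s, hs⟩ := FiberSymbols.exists_isFiberAt (w₀ := w₀) hv₀ hv₁ hw₁ hw₂ hsym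
  have hess (z : ℂ) : z ∈ essSpec H ↔ z ∈ SigK v₁ w₁ w₂ K :=
    ((hs.isFiberHamiltonian hH).mem_essSpec_iff hd).trans hs.mem_SigK_iff.symm
  have hfix (z : ℂ) (hz : z ∉ SigK v₁ w₁ w₂ K) :
      z ∈ spectrum ℂ H ↔ ∃ g : Hkk d, g ≠ 0 ∧ T z g = g := by
    have hzr : z ∉ range s.w₂ := fun h => hz (hs.mem_SigK_iff.2 (.inl h))
    rw [mem_spectrum_iff_exists_eigenvector (hs.isSelfAdjoint hH) (mt (hess z).1 hz),
      (hs.isFiberHamiltonian hH).exists_eigenvector_iff hzr]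
    exact exists_congr fun g => and_congr_right' (hs.fixedPoint_iff hz (hT z hz) g).symm
  refine ⟨Set.ext fun z => ?_, hfix⟩
  rw [Set.mem_sdiff, hess, and_comm]
  exact and_congr_right (hfix z)

/-- For every `K ∈ T^d`,
`σ_disc(H(K)) = σ(H(K)) \ σ_ess(H(K)) = {z ∉ Σ_K : I − T(K,z) is not injective}`; i.e. a point
`z` outside `Σ_K` belongs to `σ(H(K))` iff `T(K,z)` has eigenvalue `1`. -/
theorem discSpec_eq_T_fixed_points
    (d : ℕ) (hd : 1 ≤ d)
    (w₀ v₀ v₁ : Td d → ℝ) (w₁ : Td d → Td d → ℝ) (w₂ : Td d → Td d → Td d → ℝ)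
    (hw₀ : Continuous w₀) (hv₀ : Continuous v₀) (hv₁ : Continuous v₁)
    (hw₁ : Continuous fun x : Td d × Td d => w₁ x.1 x.2)
    (hw₂ : Continuous fun x : Td d × Td d × Td d => w₂ x.1 x.2.1 x.2.2)
    (hsym : ∀ K p q : Td d, w₂ K p q = w₂ K q p)
    (K : Td d)
    (H : H3 d →L[ℂ] H3 d) (hH : IsHamiltonian w₀ v₀ v₁ w₁ w₂ K H)
    (T : ℂ → Hkk d →L[ℂ] Hkk d)
    (hT : ∀ z ∉ SigK v₁ w₁ w₂ K, IsTOp w₀ v₀ v₁ w₁ w₂ K z (T z)) :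
    spectrum ℂ H \ essSpec H =
      {z : ℂ | z ∉ SigK v₁ w₁ w₂ K ∧ ∃ g : Hkk d, g ≠ 0 ∧ T z g = g} ∧
    ∀ z ∉ SigK v₁ w₁ w₂ K, (z ∈ spectrum ℂ H ↔ ∃ g : Hkk d, g ≠ 0 ∧ T z g = g) :=
  discSpec_eq_T_fixed_points_general d hd w₀ v₀ v₁ w₁ w₂ K hv₀ hv₁ (hw₁.uncurry_left K)
    (hw₂.comp (.prodMk_right K)) (hsym K) H hH T hT
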